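/- arXiv:1910.09825 — 6 statements merged into one kernel-verified Lean document; each statement's English description precedes it below -/
import Mathlib

section
/- Let Q be a finite nonempty quasigroup. Then the number of associative triples satisfies a(Q) ≥ |Q|. That is, for any binary operation ∗ on a finite nonempty set Q such that for all a, b ∈ Q there exist unique x, y ∈ Q with a ∗ x = b and y ∗ a = b, the number of triples (x,y,z) ∈ Q³ with (x ∗ y) ∗ z = x ∗ (y ∗ z) is at least the cardinality of Q. -/
/-- A finite nonempty quasigroup has at least `|Q|` associative triples. -/
theorem assoc_triples_ge_card (Q : Type*) [Fintype Q] [Nonempty Q] (mul : Q → Q → Q)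
    (hQ : ∀ a b : Q, (∃! x, mul a x = b) ∧ (∃! y, mul y a = b)) :
    Fintype.card Q ≤
      Nat.card {t : Q × Q × Q //
        mul (mul t.1 t.2.1) t.2.2 = mul t.1 (mul t.2.1 t.2.2)} := by
  -- For each `a`, pick `e a * a = a` and `a * f a = a`; then `(e a, a, f a)` is associative.
  choose f hf using fun a => (hQ a a).1.exists
  choose e he using fun a => (hQ a a).2.exists
  rw [← Nat.card_eq_fintype_card]
  refine Nat.card_le_card_of_injective
    (fun a => ⟨(e a, a, f a), by simp only [he, hf]⟩) ?_
  intro a b h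
  exact congrArg (fun t => t.1.2.1) h
end

section
/- Let q be an odd prime power and let a ∈ F_q be such that a ∉ {−1, 0, 1} and both a and a+1 are squares in F_q. Then the mapping L_{a,a²} is a Latin square: for every fixed x ∈ F_q the map y ↦ L_{a,a²}(x,y) is a bijection of F_q, and for every fixed y ∈ F_q the map x ↦ L_{a,a²}(x,y) is a bijection of F_q. -/
open scoped Classical

/-- If `a ∉ {-1,0,1}` and both `a` and `a+1` are squares, then `L_{a,a²}` is a
Latin square: all rows and all columns are bijections. -/
theorem Laa2_isLatinSquare (F : Type*) [Field F] [Fintype F]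
    (q : ℕ) (hq : Fintype.card F = q) (hodd : Odd q)
    (a : F) (ha1 : a ≠ -1) (ha2 : a ≠ 0) (ha3 : a ≠ 1)
    (hs1 : IsSquare a) (hs2 : IsSquare (a + 1))
    (L : F → F → F)
    (hL : ∀ x y : F,
      L x y = if IsSquare (y - x) then x + a * (y - x) else x + a ^ 2 * (y - x)) :
    (∀ x : F, Function.Bijective fun y => L x y) ∧
    (∀ y : F, Function.Bijective fun x => L x y) := by
  have key : ∀ c d e : F, c ≠ 0 → IsSquare c → IsSquare d → d = c * e → IsSquare e := by
    intro c d e hc hcs hd h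
    have : e = d / c := by rw [h]; field_simp
    rw [this]
    exact hd.div hcs
  have h1 : a - 1 ≠ 0 := sub_ne_zero.mpr ha3
  have h2 : a + 1 ≠ 0 := fun h => ha1 (eq_neg_of_add_eq_zero_left h)
  constructor
  · intro x
    apply Finite.injective_iff_bijective.mp
    intro y z h
    simp only [hL] at h
    split_ifs at h with hy hz hz
    · have := mul_left_cancel₀ ha2 (add_left_cancel h)
      linear_combination this
    · exact absurd (key a _ (z - x) ha2 hs1 hy
        (mul_left_cancel₀ ha2 (by linear_combination h))) hz
    · exact absurd (key a _ (y - x) ha2 hs1 hz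
        (mul_left_cancel₀ ha2 (by linear_combination -h))) hy
    · have := mul_left_cancel₀ (pow_ne_zero 2 ha2) (add_left_cancel h)
      linear_combination this
  · intro y
    apply Finite.injective_iff_bijective.mp
    intro x z h
    simp only [hL] at h
    split_ifs at h with hx hz hz
    · exact mul_left_cancel₀ h1 (by linear_combination -h)
    · exact absurd (key (a + 1) _ (y - z) h2 hs2 hx
        (mul_left_cancel₀ h1 (by linear_combination h))) hz
    · exact absurd (key (a + 1) _ (y - x) h2 hs2 hz
        (mul_left_cancel₀ h1 (by linear_combination -h))) hx
    · exact mul_left_cancel₀ (mul_ne_zero h1 h2) (by linear_combination -h)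
end

section
/- Let q ≡ 1 (mod 4) be a prime power. Let a ∈ F_q be such that a ≠ −1, 0, 1, the elements a, a+1, a³−a−1 are squares in F_q, and the elements a−1, a²+1, a²−a−1, a²+a+1, a²+a−1 are non-squares in F_q. Then L_{a,a²} is the multiplication table of a maximally nonassociative quasigroup: L_{a,a²} is a Latin square (the binary operation (x,y) ↦ L_{a,a²}(x,y) is a quasigroup operation on F_q) and the number of triples (x,y,z) ∈ F_q³ with L_{a,a²}(L_{a,a²}(x,y), z) = L_{a,a²}(x, L_{a,a²}(y,z)) equals q. -/
open scoped Classical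


set_option linter.unusedSimpArgs false

section helpers

variable {F : Type*} [Field F] [Fintype F]

lemma aux_char_sq {x : F} (hx : x ≠ 0) (h : IsSquare x) : quadraticChar F x = 1 :=
  (quadraticChar_one_iff_isSquare hx).2 h

lemma aux_char_nsq {x : F} (h : ¬ IsSquare x) : quadraticChar F x = -1 :=
  quadraticChar_neg_one_iff_not_isSquare.2 h

lemma aux_char_sq' {x : F} (h : IsSquare x) : quadraticChar F x = 1 ∨ x = 0 := by
  by_cases hx : x = 0
  · exact Or.inr hx
  · exact Or.inl (aux_char_sq hx h)

/-- The core algebraic case analysis. -/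
lemma aux_core (a : F) (hm : quadraticChar F (-1) = 1)
    (c0 : quadraticChar F a = 1) (c1 : quadraticChar F (a + 1) = 1)
    (hs3 : IsSquare (a ^ 3 - a - 1))
    (n1 : quadraticChar F (a - 1) = -1) (n2 : quadraticChar F (a ^ 2 + 1) = -1)
    (n3 : quadraticChar F (a ^ 2 - a - 1) = -1) (n4 : quadraticChar F (a ^ 2 + a + 1) = -1)
    (n5 : quadraticChar F (a ^ 2 + a - 1) = -1)
    (f : F → F) (hf : ∀ x, f x = if IsSquare x then a * x else a ^ 2 * x)
    (u v : F) (hu : u ≠ 0) (hv : v ≠ 0)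
    (e : f u + f (u + v - f u) = f (u + f v)) : False := by
  have nz : ∀ {x : F}, quadraticChar F x ≠ 0 → x ≠ 0 := by
    intro x h hx
    exact h (by simp [hx])
  have a0 : a ≠ 0 := nz (by simp [c0])
  have a1 : a - 1 ≠ 0 := nz (by simp [n1])
  have a2 : a + 1 ≠ 0 := nz (by simp [c1])
  have a5 : a ^ 2 + a - 1 ≠ 0 := nz (by simp [n5])
  rcases em (IsSquare u) with su | su <;> rcases em (IsSquare v) with sv | sv <;>
    simp only [hf u, hf v, su, sv, if_true, if_false] at e
  · have xu := aux_char_sq hu su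
    have xv := aux_char_sq hv sv
    rcases em (IsSquare (u + v - a * u)) with s1 | s1 <;> rcases em (IsSquare (u + a * v)) with s2 | s2 <;>
      simp only [hf (u + v - a * u), hf (u + a * v), s1, s2, if_true, if_false] at e
    · -- case 1 1 1 1
      have x2 := aux_char_sq' s2
      have := congrArg (quadraticChar F) (show ((-1)*a*(a-1)) * (u + a * v) = (a*(a-1)*(a-1)) * u by linear_combination (a) * e)
      simp only [map_mul, hm, c0, c1, n1, n2, n3, n4, n5, xu] at this
      rcases x2 with x2 | x2
      · rw [x2] at this; omega
      · rw [x2, quadraticChar_zero] at this; omega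
    · -- case 1 1 1 2
      have x1 := aux_char_sq' s1
      have := congrArg (quadraticChar F) (show ((-1)*a*(a+1)*(a-1)) * (u + v - a * u) = (a*(a-1)*(a^2+1)) * u by linear_combination (1) * e)
      simp only [map_mul, hm, c0, c1, n1, n2, n3, n4, n5, xu] at this
      rcases x1 with x1 | x1
      · rw [x1] at this; omega
      · rw [x1, quadraticChar_zero] at this; omega
    · -- case 1 1 2 1
      have : (a*a*(a-1)) * u = 0 := by linear_combination (-1) * e
      simp [a0, a1, a5, hu] at this
    · -- case 1 1 2 2
      have x2 := aux_char_nsq s2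
      have := congrArg (quadraticChar F) (show ((-1)*a*a*(a-1)) * (u + a * v) = (a*a*a*(a-1)) * u by linear_combination (a) * e)
      simp only [map_mul, hm, c0, c1, n1, n2, n3, n4, n5, xu] at this
      rw [x2] at this; omega
  · have xu := aux_char_sq hu su
    have xv := aux_char_nsq sv
    rcases em (IsSquare (u + v - a * u)) with s1 | s1 <;> rcases em (IsSquare (u + a ^ 2 * v)) with s2 | s2 <;>
      simp only [hf (u + v - a * u), hf (u + a ^ 2 * v), s1, s2, if_true, if_false] at e
    · -- case 1 2 1 1
      have := congrArg (quadraticChar F) (show ((-1)*a*(a+1)*(a-1)) * v = (a*(a-1)) * u by linear_combination (1) * e)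
      simp only [map_mul, hm, c0, c1, n1, n2, n3, n4, n5, xu] at this
      rw [xv] at this; omega
    · -- case 1 2 1 2
      have x2 := aux_char_nsq s2
      have := congrArg (quadraticChar F) (show ((-1)*a*(a-1)*(a^2+a+1)) * (u + a ^ 2 * v) = (a*(a-1)*(a^2-a-1)) * u by linear_combination (a ^ 2) * e)
      simp only [map_mul, hm, c0, c1, n1, n2, n3, n4, n5, xu] at this
      rw [x2] at this; omega
    · -- case 1 2 2 1
      have := congrArg (quadraticChar F) (show ((-1)*a*a*(a-1)) * v = (a*a*(a-1)) * u by linear_combination (1) * e)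
      simp only [map_mul, hm, c0, c1, n1, n2, n3, n4, n5, xu] at this
      rw [xv] at this; omega
    · -- case 1 2 2 2
      have := congrArg (quadraticChar F) (show ((-1)*a*a*(a+1)*(a-1)) * v = (a*(a+1)*(a-1)) * u by linear_combination (1) * e)
      simp only [map_mul, hm, c0, c1, n1, n2, n3, n4, n5, xu] at this
      rw [xv] at this; omega
  · have xu := aux_char_nsq su
    have xv := aux_char_sq hv sv
    rcases em (IsSquare (u + v - a ^ 2 * u)) with s1 | s1 <;> rcases em (IsSquare (u + a * v)) with s2 | s2 <;>
      simp only [hf (u + v - a ^ 2 * u), hf (u + a * v), s1, s2, if_true, if_false] at e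
    · -- case 2 1 1 1
      have := congrArg (quadraticChar F) (show ((-1)*a*(a-1)) * v = (a*a*(a-1)) * u by linear_combination (1) * e)
      simp only [map_mul, hm, c0, c1, n1, n2, n3, n4, n5, xu] at this
      rw [xv] at this; omega
    · -- case 2 1 1 2
      have := congrArg (quadraticChar F) (show ((-1)*a*(a+1)*(a-1)) * v = (a*(a+1)*(a-1)) * u by linear_combination (1) * e)
      simp only [map_mul, hm, c0, c1, n1, n2, n3, n4, n5, xu] at this
      rw [xv] at this; omega
    · -- case 2 1 2 1
      have : (a*(a-1)*(a^2+a-1)) * u = 0 := by linear_combination (-1) * e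
      simp [a0, a1, a5, hu] at this
    · -- case 2 1 2 2
      have := congrArg (quadraticChar F) (show ((-1)*a*a*(a-1)) * v = (a*a*(a+1)*(a-1)) * u by linear_combination (1) * e)
      simp only [map_mul, hm, c0, c1, n1, n2, n3, n4, n5, xu] at this
      rw [xv] at this; omega
  · have xu := aux_char_nsq su
    have xv := aux_char_nsq sv
    rcases em (IsSquare (u + v - a ^ 2 * u)) with s1 | s1 <;> rcases em (IsSquare (u + a ^ 2 * v)) with s2 | s2 <;>
      simp only [hf (u + v - a ^ 2 * u), hf (u + a ^ 2 * v), s1, s2, if_true, if_false] at e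
    · -- case 2 2 1 1
      have x1 := aux_char_sq' s1
      have x2 := aux_char_sq' s2
      rcases aux_char_sq' hs3 with c3 | c3
      · have := congrArg (quadraticChar F) (show ((-1)*a*(a+1)*(a-1)) * (u + a ^ 2 * v) = (a*(a^3-a-1)*(a-1)) * u by linear_combination (a ^ 2) * e)
        simp only [map_mul, hm, c0, c1, n1, n2, n3, n4, n5, c3, xu] at this
        rcases x2 with x2 | x2
        · rw [x2] at this; omega
        · rw [x2, quadraticChar_zero] at this; omega
      · have := congrArg (quadraticChar F) (show ((-1)*a*(a+1)*(a-1)) * (u + v - a ^ 2 * u) = (a*(a-1)*a*(a+1)) * u by linear_combination e + (a*(a-1)*u) * c3)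
        simp only [map_mul, hm, c0, c1, n1, n2, n3, n4, n5, xu] at this
        rcases x1 with x1 | x1
        · rw [x1] at this; omega
        · rw [x1, quadraticChar_zero] at this; omega
    · -- case 2 2 1 2
      have := congrArg (quadraticChar F) (show ((-1)*a*(a-1)*(a^2+a+1)) * v = (a*(a+1)*(a-1)) * u by linear_combination (1) * e)
      simp only [map_mul, hm, c0, c1, n1, n2, n3, n4, n5, xu] at this
      rw [xv] at this; omega
    · -- case 2 2 2 1
      have := congrArg (quadraticChar F) (show ((-1)*a*a*(a-1)) * v = (a*(a-1)*(a^2+a-1)) * u by linear_combination (1) * e)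
      simp only [map_mul, hm, c0, c1, n1, n2, n3, n4, n5, xu] at this
      rw [xv] at this; omega
    · -- case 2 2 2 2
      have x2 := aux_char_nsq s2
      have := congrArg (quadraticChar F) (show ((-1)*a*a*(a+1)*(a-1)) * (u + a ^ 2 * v) = (a*a*(a+1)*(a+1)*(a-1)*(a-1)) * u by linear_combination (a ^ 2) * e)
      simp only [map_mul, hm, c0, c1, n1, n2, n3, n4, n5, xu] at this
      rw [x2] at this; omega

end helpers

/-- Theorem 2.4: for a prime power `q ≡ 1 (mod 4)` and suitable `a`, the map
`L_{a,a²}` is a maximally nonassociative quasigroup. -/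
theorem Laa2_maximallyNonassociative_q1mod4 (F : Type*) [Field F] [Fintype F]
    (q : ℕ) (hq : Fintype.card F = q) (h4 : q % 4 = 1)
    (a : F) (ha1 : a ≠ -1) (ha2 : a ≠ 0) (ha3 : a ≠ 1)
    (hs1 : IsSquare a) (hs2 : IsSquare (a + 1)) (hs3 : IsSquare (a ^ 3 - a - 1))
    (hn1 : ¬ IsSquare (a - 1)) (hn2 : ¬ IsSquare (a ^ 2 + 1))
    (hn3 : ¬ IsSquare (a ^ 2 - a - 1)) (hn4 : ¬ IsSquare (a ^ 2 + a + 1))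
    (hn5 : ¬ IsSquare (a ^ 2 + a - 1))
    (L : F → F → F)
    (hL : ∀ x y : F,
      L x y = if IsSquare (y - x) then x + a * (y - x) else x + a ^ 2 * (y - x)) :
    (∀ u v : F, (∃! x, L u x = v) ∧ (∃! y, L y u = v)) ∧
    Nat.card {t : F × F × F //
      L (L t.1 t.2.1) t.2.2 = L t.1 (L t.2.1 t.2.2)} = q := by
  have hL' : ∃ f : F → F, (∀ x, f x = if IsSquare x then a * x else a ^ 2 * x) ∧
      ∀ x y, L x y = x + f (y - x) := by
    refine ⟨fun x => if IsSquare x then a * x else a ^ 2 * x, fun x => rfl, fun x y => ?_⟩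
    rw [hL]
    dsimp only
    split_ifs <;> rfl
  obtain ⟨f, hf, hLf⟩ := hL'
  have a1 : a - 1 ≠ 0 := sub_ne_zero.2 ha3
  have a2 : a + 1 ≠ 0 := fun h => ha1 (eq_neg_of_add_eq_zero_left h)
  have sm : IsSquare (-1 : F) := by
    rw [FiniteField.isSquare_neg_one_iff, hq, h4]; norm_num
  have hm : quadraticChar F (-1) = 1 := aux_char_sq (by simp) sm
  have c0 := aux_char_sq ha2 hs1
  have c1 := aux_char_sq a2 hs2
  have n1 := aux_char_nsq hn1
  have nsq : ∀ x : F, (¬ IsSquare x) ↔ quadraticChar F x = -1 :=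
    fun x => quadraticChar_neg_one_iff_not_isSquare.symm
  have sqf : ∀ x, IsSquare (f x) ↔ IsSquare x := by
    intro x
    rw [← not_iff_not, nsq, nsq, hf]
    split_ifs <;> simp [map_mul, map_pow, c0]
  have finj : Function.Injective f := by
    intro x y h
    have h2 : IsSquare x ↔ IsSquare y := by rw [← sqf x, ← sqf y, h]
    rw [hf x, hf y] at h
    by_cases hx : IsSquare x
    · have hy := h2.1 hx
      simpa [hx, hy, ha2] using h
    · have hy : ¬ IsSquare y := fun h => hx (h2.2 h)
      simpa [hx, hy, ha2] using h
  have sqg : ∀ x, x ≠ 0 → (IsSquare (x - f x) ↔ ¬ IsSquare x) := by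
    intro x hx0
    have key : quadraticChar F (x - f x) = - quadraticChar F x := by
      rw [hf]
      split_ifs
      · rw [show x - a * x = (-1) * (a - 1) * x by ring]
        simp [map_mul, hm, n1, -neg_mul]
      · rw [show x - a ^ 2 * x = (-1) * (a - 1) * (a + 1) * x by ring]
        simp [map_mul, hm, n1, c1, -neg_mul]
    by_cases hx : IsSquare x
    · have h1 := aux_char_sq hx0 hx
      rw [h1] at key
      have := (nsq _).2 key
      tauto
    · have h1 := aux_char_nsq hx
      rw [h1] at key
      have : IsSquare (x - f x) := by
        by_contra hc
        rw [aux_char_nsq hc] at key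
        omega
      tauto
  have f0 : f 0 = 0 := by simp [hf]
  have b2 : (1 : F) - a ^ 2 ≠ 0 := by
    rw [show 1 - a ^ 2 = -((a - 1) * (a + 1)) by ring]
    exact neg_ne_zero.2 (mul_ne_zero a1 a2)
  have b1 : (1 : F) - a ≠ 0 := by
    rw [← neg_sub]; exact neg_ne_zero.2 a1
  have g0 : ∀ x, x - f x = 0 → x = 0 := by
    intro x h
    rw [hf] at h
    split_ifs at h
    · have : (1 - a) * x = 0 := by linear_combination h
      exact (mul_eq_zero.1 this).resolve_left b1
    · have : (1 - a ^ 2) * x = 0 := by linear_combination h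
      exact (mul_eq_zero.1 this).resolve_left b2
  have ginj : ∀ x y, x - f x = y - f y → x = y := by
    intro x y h
    by_cases hx0 : x = 0
    · subst hx0
      rw [f0, sub_zero] at h
      exact (g0 y h.symm).symm
    by_cases hy0 : y = 0
    · subst hy0
      rw [f0, sub_zero] at h
      exact g0 x h
    have h2 : (¬ IsSquare x) ↔ (¬ IsSquare y) := by rw [← sqg x hx0, ← sqg y hy0, h]
    rw [hf x, hf y] at h
    by_cases hx : IsSquare x
    · have hy : IsSquare y := by tauto
      simp only [hx, hy, if_true] at h
      exact mul_left_cancel₀ b1 (by linear_combination h)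
    · have hy : ¬ IsSquare y := by tauto
      simp only [hx, hy, if_false] at h
      exact mul_left_cancel₀ b2 (by linear_combination h)
  refine ⟨fun u v => ⟨?_, ?_⟩, ?_⟩
  · have inj : Function.Injective (L u) := by
      intro x y h
      rw [hLf, hLf] at h
      have := finj (add_left_cancel h)
      exact sub_left_injective this
    exact (Finite.injective_iff_bijective.1 inj).existsUnique v
  · have inj : Function.Injective (fun y => L y u) := by
      intro x y h
      simp only [hLf] at h
      have := ginj (u - x) (u - y) (by linear_combination (-1 : F) * h)
      exact sub_right_injective this
    exact (Finite.injective_iff_bijective.1 inj).existsUnique v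
  · have key : ∀ x y z : F, L (L x y) z = L x (L y z) → x = y ∧ y = z := by
      intro x y z h
      simp only [hLf] at h
      rw [show z - (x + f (y - x)) = (y - x) + (z - y) - f (y - x) by ring,
        show y + f (z - y) - x = (y - x) + f (z - y) by ring, add_assoc] at h
      have e := add_left_cancel h
      by_cases hu : y - x = 0
      · rw [hu, f0] at e
        simp only [zero_add, sub_zero] at e
        have e2 := finj e
        have := g0 (z - y) (sub_eq_zero.2 e2)
        exact ⟨(sub_eq_zero.1 hu).symm, (sub_eq_zero.1 this).symm⟩
      · exfalso
        by_cases hv : z - y = 0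
        · rw [hv, f0] at e
          simp only [add_zero] at e
          have e2 : f (y - x - f (y - x)) = f 0 := by rw [f0]; linear_combination e
          exact hu (g0 _ (finj e2))
        · exact aux_core a hm c0 c1 hs3 n1 (aux_char_nsq hn2) (aux_char_nsq hn3)
            (aux_char_nsq hn4) (aux_char_nsq hn5) f hf _ _ hu hv e
    rw [← hq, ← Nat.card_eq_fintype_card]
    refine Nat.card_congr
      { toFun := fun t => t.1.1
        invFun := fun x => ⟨(x, x, x), by simp [hLf, f0]⟩
        left_inv := ?_
        right_inv := fun x => rfl }
    rintro ⟨⟨x, y, z⟩, h⟩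
    obtain ⟨rfl, rfl⟩ := key x y z h
    rfl
end

section
/- Let q ≡ 3 (mod 4) be a prime power. Let a ∈ F_q be such that a ≠ −1, 0, 1, the elements a, a+1, a−1, a²+1, a³+a²−1 are squares in F_q, and the elements a²−a+1, a²+a+1, a²+a−1 are non-squares in F_q. Then L_{a,a²} is the multiplication table of a maximally nonassociative quasigroup: L_{a,a²} is a Latin square (the binary operation (x,y) ↦ L_{a,a²}(x,y) is a quasigroup operation on F_q) and the number of triples (x,y,z) ∈ F_q³ with L_{a,a²}(L_{a,a²}(x,y), z) = L_{a,a²}(x, L_{a,a²}(y,z)) equals q. -/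
open scoped Classical

set_option linter.unusedSimpArgs false

lemma Laa2_core (F : Type*) [Field F] [Fintype F]
    (χ : F →*₀ ℤ) (hsq : ∀ x, IsSquare x → x ≠ 0 → χ x = 1) (hns : ∀ x, ¬ IsSquare x → χ x = -1)
    (a : F) (ha1 : a + 1 ≠ 0) (ha2 : a ≠ 0) (ha3 : a - 1 ≠ 0)
    (hm : χ (-1) = -1) (hs1 : χ a = 1) (hs2 : χ (a + 1) = 1) (hs3 : χ (a - 1) = 1)
    (hs4 : χ (a ^ 2 + 1) = 1) (hs5 : χ (a ^ 3 + a ^ 2 - 1) = 0 ∨ χ (a ^ 3 + a ^ 2 - 1) = 1)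
    (hn1 : χ (a ^ 2 - a + 1) = -1) (hn2 : χ (a ^ 2 + a + 1) = -1)
    (hn3 : χ (a ^ 2 + a - 1) = -1)
    (f : F → F) (hf : ∀ t, f t = if IsSquare t then a * t else a ^ 2 * t)
    (u v : F) (h : f u + f (v + u - f u) = f (u + f v)) : u = 0 ∧ v = 0 := by
  have hn0 : a ^ 2 + a - 1 ≠ 0 := by
    intro h0; rw [h0, map_zero] at hn3; norm_num at hn3
  have hsq' : ∀ x, IsSquare x → χ x = 0 ∨ χ x = 1 := by
    intro x hx
    by_cases h0 : x = 0
    · left; rw [h0, map_zero]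
    · right; exact hsq x hx h0
  have f0 : f 0 = 0 := by rw [hf]; simp
  have fz : ∀ t, f t = 0 → t = 0 := by
    intro t ht; rw [hf] at ht; split_ifs at ht <;> simpa [ha2] using ht
  have ffix : ∀ t, f t = t → t = 0 := by
    intro t ht
    rw [hf] at ht
    split_ifs at ht
    · have : (a - 1) * t = 0 := by linear_combination ht
      simpa [ha3] using this
    · have : (a + 1) * ((a - 1) * t) = 0 := by linear_combination ht
      simpa [ha3, ha1] using this
  have χf : ∀ t, χ (f t) = χ t := by
    intro t; rw [hf]; split_ifs <;> simp [hs1]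
  have finj : ∀ s t, f s = f t → s = t := by
    intro s t hst
    have h1 : χ s = χ t := by rw [← χf s, ← χf t, hst]
    have key : ∀ s t, IsSquare s → ¬ IsSquare t → χ s = χ t → False := by
      intro s t h1 h2 h3
      rw [hns t h2] at h3
      rcases hsq' s h1 with h | h <;> rw [h] at h3 <;> norm_num at h3
    rw [hf, hf] at hst
    split_ifs at hst with h2 h3 h3
    · exact mul_left_cancel₀ ha2 hst
    · exact (key _ _ h2 h3 h1).elim
    · exact (key _ _ h3 h2 h1.symm).elim
    · exact mul_left_cancel₀ (pow_ne_zero 2 ha2) hst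
  by_cases hu : u = 0
  · subst hu
    simp only [f0, zero_add, add_zero, sub_zero] at h
    exact ⟨rfl, ffix v (finj _ _ h).symm⟩
  by_cases hv : v = 0
  · subst hv
    simp only [f0, zero_add, add_zero] at h
    have := fz _ (left_eq_add.mp (h.symm))
    exact ⟨ffix u (sub_eq_zero.mp this).symm, rfl⟩
  exfalso
  by_cases hu2 : IsSquare u
  · by_cases hv2 : IsSquare v
    · obtain ⟨w, hw⟩ : ∃ w, w = v + u - a * u := ⟨_, rfl⟩
      by_cases hw2 : IsSquare w
      · obtain ⟨x, hx⟩ : ∃ x, x = u + a * v := ⟨_, rfl⟩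
        by_cases hx2 : IsSquare x
        · rw [hf u, if_pos hu2, hf v, if_pos hv2, ← hw, ← hx, hf w, if_pos hw2, hf x, if_pos hx2, hw, hx] at h
          have e : a * (a - 1) * v = (-1) * a * (a - 1) * u := by linear_combination -h
          have e2 := congrArg χ e
          simp only [map_mul, hs1, hs2, hs3, hs4, hm, hn1, hn2, hn3] at e2
          have t1 := hsq u hu2 hu
          have t2 := hsq v hv2 hv
          omega
        · rw [hf u, if_pos hu2, hf v, if_pos hv2, ← hw, ← hx, hf w, if_pos hw2, hf x, if_neg hx2, hw, hx] at h
          have e : a * (a + 1) * (a - 1) * w = (-1) * a * (a - 1) * (a ^ 2 + 1) * u := by linear_combination -h + a * (a + 1) * (a - 1) * hw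
          have e2 := congrArg χ e
          simp only [map_mul, hs1, hs2, hs3, hs4, hm, hn1, hn2, hn3] at e2
          have t1 := hsq u hu2 hu
          have t2 := hsq' w hw2
          omega
      · obtain ⟨x, hx⟩ : ∃ x, x = u + a * v := ⟨_, rfl⟩
        by_cases hx2 : IsSquare x
        · rw [hf u, if_pos hu2, hf v, if_pos hv2, ← hw, ← hx, hf w, if_neg hw2, hf x, if_pos hx2, hw, hx] at h
          have e : (-1) * a * a * (a - 1) * u = 0 := by linear_combination h
          simp [ha1, ha2, ha3, hu, hn0] at e
        · rw [hf u, if_pos hu2, hf v, if_pos hv2, ← hw, ← hx, hf w, if_neg hw2, hf x, if_neg hx2, hw, hx] at h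
          have e : a * a * (a - 1) * v = (-1) * a * (a + 1) * (a - 1) * u := by linear_combination -h
          have e2 := congrArg χ e
          simp only [map_mul, hs1, hs2, hs3, hs4, hm, hn1, hn2, hn3] at e2
          have t1 := hsq u hu2 hu
          have t2 := hsq v hv2 hv
          omega
    · obtain ⟨w, hw⟩ : ∃ w, w = v + u - a * u := ⟨_, rfl⟩
      by_cases hw2 : IsSquare w
      · obtain ⟨x, hx⟩ : ∃ x, x = u + a ^ 2 * v := ⟨_, rfl⟩
        by_cases hx2 : IsSquare x
        · rw [hf u, if_pos hu2, hf v, if_neg hv2, ← hw, ← hx, hf w, if_pos hw2, hf x, if_pos hx2, hw, hx] at h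
          have e : a * (a + 1) * (a - 1) * w = (-1) * a * a * a * (a - 1) * u := by linear_combination -h + a * (a + 1) * (a - 1) * hw
          have e2 := congrArg χ e
          simp only [map_mul, hs1, hs2, hs3, hs4, hm, hn1, hn2, hn3] at e2
          have t1 := hsq u hu2 hu
          have t2 := hsq' w hw2
          omega
        · rw [hf u, if_pos hu2, hf v, if_neg hv2, ← hw, ← hx, hf w, if_pos hw2, hf x, if_neg hx2, hw, hx] at h
          have e : a * (a - 1) * (a ^ 2 + a + 1) * w = (-1) * a * (a + 1) * (a - 1) * (a ^ 2 - a + 1) * u := by linear_combination -h + a * (a - 1) * (a ^ 2 + a + 1) * hw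
          have e2 := congrArg χ e
          simp only [map_mul, hs1, hs2, hs3, hs4, hm, hn1, hn2, hn3] at e2
          have t1 := hsq u hu2 hu
          have t2 := hsq' w hw2
          omega
      · obtain ⟨x, hx⟩ : ∃ x, x = u + a ^ 2 * v := ⟨_, rfl⟩
        by_cases hx2 : IsSquare x
        · rw [hf u, if_pos hu2, hf v, if_neg hv2, ← hw, ← hx, hf w, if_neg hw2, hf x, if_pos hx2, hw, hx] at h
          have e : a * a * (a - 1) * x = (-1) * a * a * (a + 1) * (a - 1) * (a - 1) * u := by linear_combination (-a ^ 2) * h + a * a * (a - 1) * hx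
          have e2 := congrArg χ e
          simp only [map_mul, hs1, hs2, hs3, hs4, hm, hn1, hn2, hn3] at e2
          have t1 := hsq u hu2 hu
          have t2 := hsq' x hx2
          omega
        · rw [hf u, if_pos hu2, hf v, if_neg hv2, ← hw, ← hx, hf w, if_neg hw2, hf x, if_neg hx2, hw, hx] at h
          have e : a * a * (a + 1) * (a - 1) * w = (-1) * a * (a + 1) * (a - 1) * (a ^ 2 - a + 1) * u := by linear_combination -h + a * a * (a + 1) * (a - 1) * hw
          have e2 := congrArg χ e
          simp only [map_mul, hs1, hs2, hs3, hs4, hm, hn1, hn2, hn3] at e2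
          have t1 := hsq u hu2 hu
          have t2 := hns w hw2
          omega
  · by_cases hv2 : IsSquare v
    · obtain ⟨w, hw⟩ : ∃ w, w = v + u - a ^ 2 * u := ⟨_, rfl⟩
      by_cases hw2 : IsSquare w
      · obtain ⟨x, hx⟩ : ∃ x, x = u + a * v := ⟨_, rfl⟩
        by_cases hx2 : IsSquare x
        · rw [hf u, if_neg hu2, hf v, if_pos hv2, ← hw, ← hx, hf w, if_pos hw2, hf x, if_pos hx2, hw, hx] at h
          have e : a * (a - 1) * w = (-1) * a * (a - 1) * (a ^ 2 + a - 1) * u := by linear_combination -h + a * (a - 1) * hw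
          have e2 := congrArg χ e
          simp only [map_mul, hs1, hs2, hs3, hs4, hm, hn1, hn2, hn3] at e2
          have t1 := hns u hu2
          have t2 := hsq' w hw2
          omega
        · rw [hf u, if_neg hu2, hf v, if_pos hv2, ← hw, ← hx, hf w, if_pos hw2, hf x, if_neg hx2, hw, hx] at h
          have e : a * (a + 1) * (a - 1) * x = (-1) * a * (a + 1) * (a - 1) * (a - 1) * u := by linear_combination (-a ^ 1) * h + a * (a + 1) * (a - 1) * hx
          have e2 := congrArg χ e
          simp only [map_mul, hs1, hs2, hs3, hs4, hm, hn1, hn2, hn3] at e2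
          have t1 := hns u hu2
          have t2 := hns x hx2
          omega
      · obtain ⟨x, hx⟩ : ∃ x, x = u + a * v := ⟨_, rfl⟩
        by_cases hx2 : IsSquare x
        · rw [hf u, if_neg hu2, hf v, if_pos hv2, ← hw, ← hx, hf w, if_neg hw2, hf x, if_pos hx2, hw, hx] at h
          have e : (-1) * a * (a - 1) * (a ^ 2 + a - 1) * u = 0 := by linear_combination h
          simp [ha1, ha2, ha3, hu, hn0] at e
        · rw [hf u, if_neg hu2, hf v, if_pos hv2, ← hw, ← hx, hf w, if_neg hw2, hf x, if_neg hx2, hw, hx] at h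
          have e : a * a * (a - 1) * w = (-1) * a * a * a * (a + 1) * (a - 1) * u := by linear_combination -h + a * a * (a - 1) * hw
          have e2 := congrArg χ e
          simp only [map_mul, hs1, hs2, hs3, hs4, hm, hn1, hn2, hn3] at e2
          have t1 := hns u hu2
          have t2 := hns w hw2
          omega
    · obtain ⟨w, hw⟩ : ∃ w, w = v + u - a ^ 2 * u := ⟨_, rfl⟩
      by_cases hw2 : IsSquare w
      · obtain ⟨x, hx⟩ : ∃ x, x = u + a ^ 2 * v := ⟨_, rfl⟩
        by_cases hx2 : IsSquare x
        · rw [hf u, if_neg hu2, hf v, if_neg hv2, ← hw, ← hx, hf w, if_pos hw2, hf x, if_pos hx2, hw, hx] at h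
          have e : a * (a + 1) * (a - 1) * v = (-1) * a * a * (a - 1) * u := by linear_combination -h
          have e2 := congrArg χ e
          simp only [map_mul, hs1, hs2, hs3, hs4, hm, hn1, hn2, hn3] at e2
          have t1 := hns u hu2
          have t2 := hns v hv2
          omega
        · rw [hf u, if_neg hu2, hf v, if_neg hv2, ← hw, ← hx, hf w, if_pos hw2, hf x, if_neg hx2, hw, hx] at h
          have e : a * (a - 1) * (a ^ 2 + a + 1) * w = (-1) * a * a * a * a * (a + 1) * (a - 1) * u := by linear_combination -h + a * (a - 1) * (a ^ 2 + a + 1) * hw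
          have e2 := congrArg χ e
          simp only [map_mul, hs1, hs2, hs3, hs4, hm, hn1, hn2, hn3] at e2
          have t1 := hns u hu2
          have t2 := hsq' w hw2
          omega
      · obtain ⟨x, hx⟩ : ∃ x, x = u + a ^ 2 * v := ⟨_, rfl⟩
        by_cases hx2 : IsSquare x
        · rw [hf u, if_neg hu2, hf v, if_neg hv2, ← hw, ← hx, hf w, if_neg hw2, hf x, if_pos hx2, hw, hx] at h
          have e : a * a * (a - 1) * w = (-1) * a * (a - 1) * (a ^ 3 + a ^ 2 - 1) * u := by linear_combination -h + a * a * (a - 1) * hw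
          have e2 := congrArg χ e
          simp only [map_mul, hs1, hs2, hs3, hs4, hm, hn1, hn2, hn3] at e2
          have t1 := hns u hu2
          have t2 := hns w hw2
          rcases hs5 with h5 | h5 <;> rw [h5] at e2 <;> omega
        · rw [hf u, if_neg hu2, hf v, if_neg hv2, ← hw, ← hx, hf w, if_neg hw2, hf x, if_neg hx2, hw, hx] at h
          have e : a * a * (a + 1) * (a - 1) * v = (-1) * a * a * (a + 1) * (a - 1) * u := by linear_combination -h
          have e2 := congrArg χ e
          simp only [map_mul, hs1, hs2, hs3, hs4, hm, hn1, hn2, hn3] at e2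
          have t1 := hns u hu2
          have t2 := hns v hv2
          omega

/-- Theorem 2.5: for a prime power `q ≡ 3 (mod 4)` and suitable `a`, the map
`L_{a,a²}` is a maximally nonassociative quasigroup. -/
theorem Laa2_maximallyNonassociative_q3mod4 (F : Type*) [Field F] [Fintype F]
    (q : ℕ) (hq : Fintype.card F = q) (h4 : q % 4 = 3)
    (a : F) (ha1 : a ≠ -1) (ha2 : a ≠ 0) (ha3 : a ≠ 1)
    (hs1 : IsSquare a) (hs2 : IsSquare (a + 1)) (hs3 : IsSquare (a - 1))
    (hs4 : IsSquare (a ^ 2 + 1)) (hs5 : IsSquare (a ^ 3 + a ^ 2 - 1))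
    (hn1 : ¬ IsSquare (a ^ 2 - a + 1)) (hn2 : ¬ IsSquare (a ^ 2 + a + 1))
    (hn3 : ¬ IsSquare (a ^ 2 + a - 1))
    (L : F → F → F)
    (hL : ∀ x y : F,
      L x y = if IsSquare (y - x) then x + a * (y - x) else x + a ^ 2 * (y - x)) :
    (∀ u v : F, (∃! x, L u x = v) ∧ (∃! y, L y u = v)) ∧
    Nat.card {t : F × F × F //
      L (L t.1 t.2.1) t.2.2 = L t.1 (L t.2.1 t.2.2)} = q := by
  have hc2 : ringChar F ≠ 2 := by
    intro h
    have := FiniteField.even_card_of_char_two h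
    omega
  have hsqm : ¬ IsSquare (-1 : F) := by
    rw [FiniteField.isSquare_neg_one_iff, hq]; omega
  let χ : F →*₀ ℤ := (quadraticChar F).toMonoidWithZeroHom
  have hsq : ∀ x, IsSquare x → x ≠ 0 → χ x = 1 := fun x h1 h2 =>
    (quadraticChar_one_iff_isSquare h2).2 h1
  have hns : ∀ x, ¬ IsSquare x → χ x = -1 := fun x h =>
    quadraticChar_neg_one_iff_not_isSquare.2 h
  have k1 : a + 1 ≠ 0 := fun h => ha1 (eq_neg_of_add_eq_zero_left h)
  have k3 : a - 1 ≠ 0 := sub_ne_zero.2 ha3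
  have k4 : a ^ 2 + 1 ≠ 0 := fun h => hsqm ⟨a, by linear_combination -h⟩
  have hs5' : χ (a ^ 3 + a ^ 2 - 1) = 0 ∨ χ (a ^ 3 + a ^ 2 - 1) = 1 := by
    by_cases h0 : a ^ 3 + a ^ 2 - 1 = 0
    · left; rw [h0, map_zero]
    · right; exact hsq _ hs5 h0
  have xm := hns _ hsqm
  have x1 := hsq _ hs1 ha2
  have x2 := hsq _ hs2 k1
  have x3 := hsq _ hs3 k3
  obtain ⟨f, hf⟩ : ∃ f : F → F, ∀ t, f t = if IsSquare t then a * t else a ^ 2 * t :=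
    ⟨_, fun _ => rfl⟩
  have core := Laa2_core F χ hsq hns a k1 ha2 k3 xm x1 x2 x3
    (hsq _ hs4 k4) hs5' (hns _ hn1) (hns _ hn2) (hns _ hn3) f hf
  have hLf : ∀ x y, L x y = x + f (y - x) := by
    intro x y; rw [hL, hf]; split_ifs <;> rfl
  have key : ∀ s t, IsSquare s → ¬ IsSquare t → χ s = χ t → False := by
    intro s t h1 h2 h3
    rw [hns t h2] at h3
    by_cases h0 : s = 0
    · rw [h0, map_zero] at h3; norm_num at h3
    · rw [hsq s h1 h0] at h3; norm_num at h3
  have χf : ∀ t, χ (f t) = χ t := by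
    intro t; rw [hf]; split_ifs <;> simp [x1]
  have χg : ∀ t, χ (t - f t) = - χ t := by
    intro t; rw [hf]; split_ifs
    · rw [show t - a * t = (-1) * (a - 1) * t by ring]; simp only [map_mul, xm, x3]; ring
    · rw [show t - a ^ 2 * t = (-1) * (a - 1) * (a + 1) * t by ring]
      simp only [map_mul, xm, x3, x2]; ring
  have inj : ∀ s t, χ s = χ t → (f s = f t ∨ s - f s = t - f t) → s = t := by
    intro s t h1 hst
    rw [hf, hf] at hst
    split_ifs at hst with h2 h3 h3
    · rcases hst with h | h
      · exact mul_left_cancel₀ ha2 h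
      · exact mul_left_cancel₀ k3 (by linear_combination -h)
    · exact (key _ _ h2 h3 h1).elim
    · exact (key _ _ h3 h2 h1.symm).elim
    · rcases hst with h | h
      · exact mul_left_cancel₀ (pow_ne_zero 2 ha2) h
      · exact mul_left_cancel₀ (mul_ne_zero k3 k1) (by linear_combination -h)
  refine ⟨fun u v => ⟨?_, ?_⟩, ?_⟩
  · refine (Finite.injective_iff_bijective.1 ?_ : Function.Bijective (fun x => L u x)).existsUnique v
    intro x y hxy
    simp only [hLf] at hxy
    have h1 : f (x - u) = f (y - u) := add_left_cancel hxy
    have h2 := inj _ _ (by rw [← χf (x - u), ← χf (y - u), h1]) (Or.inl h1)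
    linear_combination h2
  · refine (Finite.injective_iff_bijective.1 ?_ : Function.Bijective (fun x => L x u)).existsUnique v
    intro x y hxy
    simp only [hLf] at hxy
    have h1 : (u - x) - f (u - x) = (u - y) - f (u - y) := by linear_combination -hxy
    have h2 := inj _ _ (by
      have := congrArg χ h1
      rw [χg, χg] at this
      linarith) (Or.inr h1)
    linear_combination -h2
  · have f0 : f 0 = 0 := by rw [hf]; simp
    rw [← hq, ← Nat.card_eq_fintype_card]
    symm
    refine Nat.card_eq_of_bijective
      (fun x => ⟨(x, x, x), by simp [hLf, f0]⟩ : F → {t : F × F × F //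
        L (L t.1 t.2.1) t.2.2 = L t.1 (L t.2.1 t.2.2)}) ⟨?_, ?_⟩
    · intro x y hxy
      simpa using hxy
    · rintro ⟨⟨x, y, z⟩, h⟩
      simp only [hLf] at h
      obtain ⟨h1, h2⟩ := core (y - x) (z - y) (by
        rw [show z - y + (y - x) - f (y - x) = z - (x + f (y - x)) by ring,
          show y - x + f (z - y) = y + f (z - y) - x by ring]
        linear_combination h)
      have e1 : y = x := sub_eq_zero.1 h1
      have e2 : z = y := sub_eq_zero.1 h2
      subst e1
      subst e2
      exact ⟨_, rfl⟩
end

section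
/- Suppose there exist maximally nonassociative quasigroups of orders r and s, where r and s are positive integers. Then there exists a maximally nonassociative quasigroup of order rs. That is, if there are finite sets Q₁, Q₂ with |Q₁| = r, |Q₂| = s and quasigroup operations on them whose numbers of associative triples equal r and s respectively, then there exists a set of cardinality rs with a quasigroup operation having exactly rs associative triples. -/
/-- Lemma 3.4: maximally nonassociative quasigroups of orders `r` and `s` give
one of order `r * s`. -/
theorem maxNonassoc_product (r s : ℕ) (hr : 0 < r) (hs : 0 < s)
    (Q₁ : Type*) (m₁ : Q₁ → Q₁ → Q₁) (hcard₁ : Nat.card Q₁ = r)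
    (hQ₁ : ∀ a b : Q₁, (∃! x, m₁ a x = b) ∧ (∃! y, m₁ y a = b))
    (ha₁ : Nat.card {t : Q₁ × Q₁ × Q₁ //
      m₁ (m₁ t.1 t.2.1) t.2.2 = m₁ t.1 (m₁ t.2.1 t.2.2)} = r)
    (Q₂ : Type*) (m₂ : Q₂ → Q₂ → Q₂) (hcard₂ : Nat.card Q₂ = s)
    (hQ₂ : ∀ a b : Q₂, (∃! x, m₂ a x = b) ∧ (∃! y, m₂ y a = b))
    (ha₂ : Nat.card {t : Q₂ × Q₂ × Q₂ //
      m₂ (m₂ t.1 t.2.1) t.2.2 = m₂ t.1 (m₂ t.2.1 t.2.2)} = s) :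
    ∃ (Q : Type) (m : Q → Q → Q),
      Nat.card Q = r * s ∧
      (∀ a b : Q, (∃! x, m a x = b) ∧ (∃! y, m y a = b)) ∧
      Nat.card {t : Q × Q × Q //
        m (m t.1 t.2.1) t.2.2 = m t.1 (m t.2.1 t.2.2)} = r * s := by
  have hf₁ : Finite Q₁ := Nat.finite_of_card_ne_zero (by omega)
  have hf₂ : Finite Q₂ := Nat.finite_of_card_ne_zero (by omega)
  have hc : Nat.card (Q₁ × Q₂) = r * s := by rw [Nat.card_prod, hcard₁, hcard₂]
  let e : Q₁ × Q₂ ≃ Fin (r * s) := Finite.equivFinOfCardEq hc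
  refine ⟨Fin (r * s), fun a b => e (m₁ (e.symm a).1 (e.symm b).1, m₂ (e.symm a).2 (e.symm b).2),
    by simp, ?_, ?_⟩
  · intro a b
    obtain ⟨⟨x₁, hx₁, ux₁⟩, ⟨y₁, hy₁, uy₁⟩⟩ := hQ₁ (e.symm a).1 (e.symm b).1
    obtain ⟨⟨x₂, hx₂, ux₂⟩, ⟨y₂, hy₂, uy₂⟩⟩ := hQ₂ (e.symm a).2 (e.symm b).2
    refine ⟨⟨e (x₁, x₂), ?_, ?_⟩, ⟨e (y₁, y₂), ?_, ?_⟩⟩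
    · simp only [Equiv.symm_apply_apply] at *
      rw [hx₁, hx₂]; simp
    · intro z hz
      have hz' := (Equiv.apply_eq_iff_eq_symm_apply e).1 hz
      rw [← Equiv.symm_apply_eq]
      exact Prod.ext (ux₁ _ (congrArg Prod.fst hz')) (ux₂ _ (congrArg Prod.snd hz'))
    · simp only [Equiv.symm_apply_apply] at *
      rw [hy₁, hy₂]; simp
    · intro z hz
      have hz' := (Equiv.apply_eq_iff_eq_symm_apply e).1 hz
      rw [← Equiv.symm_apply_eq]
      exact Prod.ext (uy₁ _ (congrArg Prod.fst hz')) (uy₂ _ (congrArg Prod.snd hz'))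
  · conv_rhs => rw [← ha₁, ← ha₂]
    rw [← Nat.card_prod]
    refine Nat.card_congr
      { toFun := fun t =>
          (⟨((e.symm t.1.1).1, (e.symm t.1.2.1).1, (e.symm t.1.2.2).1), ?_⟩,
           ⟨((e.symm t.1.1).2, (e.symm t.1.2.1).2, (e.symm t.1.2.2).2), ?_⟩)
        invFun := fun p =>
          ⟨(e (p.1.1.1, p.2.1.1), e (p.1.1.2.1, p.2.1.2.1), e (p.1.1.2.2, p.2.1.2.2)), ?_⟩
        left_inv := ?_
        right_inv := ?_ }
    · have h := e.injective t.2
      simp only [Equiv.symm_apply_apply] at h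
      exact congrArg Prod.fst h
    · have h := e.injective t.2
      simp only [Equiv.symm_apply_apply] at h
      exact congrArg Prod.snd h
    · have h₁ := p.1.2
      have h₂ := p.2.2
      simp only [Equiv.symm_apply_apply]
      rw [h₁, h₂]
    · intro t
      simp
    · intro p
      simp
end

section
/- Let q be a prime power with q ≡ 1 (mod 4) and q ≥ 9. Then there exists a maximally nonassociative quasigroup of order q, i.e. a quasigroup operation on a set of cardinality q whose number of associative triples equals q. -/
namespace MaxNonassoc

/-- A quasigroup of order `q` in which only the diagonal triples associate. -/
def Good (q : ℕ) : Prop :=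
  ∃ (Q : Type) (m : Q → Q → Q), Nat.card Q = q ∧
    (∀ a b : Q, (∃! x, m a x = b) ∧ (∃! y, m y a = b)) ∧
    (∀ x y z : Q, m (m x y) z = m x (m y z) ↔ (x = y ∧ y = z))

theorem Good.result {q : ℕ} (h : Good q) :
    ∃ (Q : Type) (m : Q → Q → Q),
      Nat.card Q = q ∧
      (∀ a b : Q, (∃! x, m a x = b) ∧ (∃! y, m y a = b)) ∧
      Nat.card {t : Q × Q × Q //
        m (m t.1 t.2.1) t.2.2 = m t.1 (m t.2.1 t.2.2)} = q := by
  obtain ⟨Q, m, hc, hq, ha⟩ := h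
  refine ⟨Q, m, hc, hq, ?_⟩
  rw [← hc]
  refine Nat.card_congr ⟨fun t => t.1.1, fun x => ⟨(x, x, x), (ha x x x).2 ⟨rfl, rfl⟩⟩, ?_, ?_⟩
  · rintro ⟨⟨x, y, z⟩, h⟩
    obtain ⟨h1, h2⟩ := (ha x y z).1 h
    subst h1; subst h2; rfl
  · intro x; rfl

theorem Good.mul {q r : ℕ} (h : Good q) (h' : Good r) : Good (q * r) := by
  obtain ⟨Q, m, hc, hq, ha⟩ := h
  obtain ⟨Q', m', hc', hq', ha'⟩ := h'
  refine ⟨Q × Q', fun x y => (m x.1 y.1, m' x.2 y.2), ?_, ?_, ?_⟩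
  · rw [Nat.card_prod, hc, hc']
  · rintro ⟨a, a'⟩ ⟨b, b'⟩
    obtain ⟨⟨x, hx, ux⟩, ⟨y, hy, uy⟩⟩ := hq a b
    obtain ⟨⟨x', hx', ux'⟩, ⟨y', hy', uy'⟩⟩ := hq' a' b'
    constructor
    · refine ⟨(x, x'), by simp_all, ?_⟩
      rintro ⟨w, w'⟩ hw
      simp only [Prod.mk.injEq] at hw
      exact Prod.ext (ux w hw.1) (ux' w' hw.2)
    · refine ⟨(y, y'), by simp_all, ?_⟩
      rintro ⟨w, w'⟩ hw
      simp only [Prod.mk.injEq] at hw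
      exact Prod.ext (uy w hw.1) (uy' w' hw.2)
  · rintro ⟨x, x'⟩ ⟨y, y'⟩ ⟨z, z'⟩
    simp only [Prod.mk.injEq, ha, ha']
    tauto

theorem Good.pow {q : ℕ} (h : Good q) {n : ℕ} (hn : 1 ≤ n) : Good (q ^ n) := by
  induction n, hn using Nat.le_induction with
  | base => simpa using h
  | succ n hn ih => rw [pow_succ]; exact ih.mul h

/-- Translation-invariant construction `x * y = x + ψ (y - x)`. -/
theorem good_of_psi {G : Type} [AddCommGroup G] [Finite G] (ψ : G → G) (h0 : ψ 0 = 0)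
    (h1 : Function.Injective ψ) (h2 : Function.Injective (fun u => u - ψ u))
    (h3 : ∀ x z : G, x + ψ (-x) + ψ (z - (x + ψ (-x))) = x + ψ (ψ z - x) → x = 0 ∧ z = 0) :
    Good (Nat.card G) := by
  have b1 := Finite.injective_iff_bijective.1 h1
  have b2 := Finite.injective_iff_bijective.1 h2
  refine ⟨G, fun x y => x + ψ (y - x), rfl, ?_, ?_⟩
  · intro a b
    constructor
    · obtain ⟨u, hu⟩ := b1.2 (b - a)
      refine ⟨a + u, by simp [hu], ?_⟩
      intro y hy
      have : ψ (y - a) = ψ u := by rw [hu]; rw [← hy]; simp only; abel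
      rw [← h1 this]; abel
    · obtain ⟨u, hu⟩ := b2.2 (a - b)
      refine ⟨a - u, ?_, ?_⟩
      · simp only at hu ⊢
        have : ψ u = u - (a - b) := by rw [← hu]; abel
        rw [sub_sub_cancel, this]; abel
      · intro y hy
        have : (fun u => u - ψ u) (a - y) = (fun u => u - ψ u) u := by
          rw [hu]; rw [← hy]; simp only; abel
        rw [← h2 this]; abel
  · intro x y z
    constructor
    · intro h
      have := h3 (x - y) (z - y) ?_
      · exact ⟨sub_eq_zero.1 this.1, (sub_eq_zero.1 this.2).symm⟩
      · have e1 : -(x - y) = y - x := by abel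
        have e2 : z - y - (x - y + ψ (y - x)) = z - (x + ψ (y - x)) := by abel
        have e3 : ψ (z - y) - (x - y) = y + ψ (z - y) - x := by abel
        rw [e1, e2, e3]
        have h' := congrArg (fun t => t - y) h
        simp only at h'
        rw [show x - y + ψ (y - x) + ψ (z - (x + ψ (y - x)))
          = x + ψ (y - x) + ψ (z - (x + ψ (y - x))) - y by abel, h']
        abel
    · rintro ⟨rfl, rfl⟩
      simp [h0]


section family

variable {K : Type} [Field K]

theorem kill (χ : MulChar K ℤ) (a b : K) (hab : a * b = 1)
    (ha : χ a = 1) (h1a : χ (1 - a) = -1)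
    (hf : χ (a ^ 2 - a - 1) = -1) (hg : χ (a ^ 2 + a - 1) = -1)
    (hm1 : χ (-1 : K) = 1)
    (σ : ℤ) (hσ0 : σ ≠ 0) (x z cj ck cl : K)
    (hx : χ x = σ)
    (hz : (χ z = σ ∧ cj = a) ∨ (χ z = -σ ∧ cj = b))
    (hw1 : ((χ (z - (1 - a) * x) = σ ∨ z - (1 - a) * x = 0) ∧ ck = a) ∨
      ((χ (z - (1 - a) * x) = -σ ∨ z - (1 - a) * x = 0) ∧ ck = b))
    (hw2 : ((χ (cj * z - x) = σ ∨ cj * z - x = 0) ∧ cl = a) ∨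
      ((χ (cj * z - x) = -σ ∨ cj * z - x = 0) ∧ cl = b))
    (heq : (1 - a) * x + ck * (z - (1 - a) * x) = x + cl * (cj * z - x)) : False := by
  have hb : χ b = 1 := by
    have := congrArg χ hab
    rw [map_mul, ha, map_one, one_mul] at this
    exact this
  have h1b : χ (1 - b) = -1 := by
    have : 1 - b = (-1) * ((1 - a) * b) := by linear_combination -hab
    rw [this, map_mul, map_mul, hm1, h1a, hb]; norm_num
  have key : ∀ A w C : K, A * w = x * C → χ A * χ w = σ * χ C := by
    intro A w C h
    rw [← map_mul, h, map_mul, hx]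
  have key0 : ∀ A w C : K, A * w = x * C → w = 0 → χ C = 0 := by
    intro A w C h hw
    have h1 := key A w C h
    rw [hw, MulChar.map_zero, mul_zero] at h1
    exact (mul_eq_zero.1 h1.symm).resolve_left hσ0
  have hneg : ∀ t : K, χ (-t) = χ t := by
    intro t; rw [neg_eq_neg_one_mul, map_mul, hm1, one_mul]
  have eA1 : χ (a * (1 - a)) = -1 := by rw [map_mul, ha, h1a]; norm_num
  have eA2 : χ (a * (1 - b)) = -1 := by rw [map_mul, ha, h1b]; norm_num
  have eA3 : χ (b * (1 - a)) = -1 := by rw [map_mul, hb, h1a]; norm_num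
  have eA4 : χ (b * (1 - b)) = -1 := by rw [map_mul, hb, h1b]; norm_num
  have eC1 : χ (a * (a * (1 - a))) = -1 := by rw [map_mul, ha, eA1]; norm_num
  have eD1 : χ (-((1 - a) * (a * (1 - a)))) = 1 := by
    rw [hneg, map_mul, h1a, eA1]; norm_num
  have eB2 : χ (b * ((1 - a) * (a ^ 2 - a - 1))) = 1 := by
    rw [map_mul, map_mul, hb, h1a, hf]; norm_num
  have eC4 : χ (-(b * (1 - a))) = -1 := by rw [hneg, eA3]
  have eC6 : χ (-(b * (b * ((1 - a) * (a ^ 2 + a - 1))))) = 1 := by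
    rw [hneg, map_mul, map_mul, map_mul, hb, h1a, hg]; norm_num
  rcases hz with ⟨hz, hj⟩ | ⟨hz, hj⟩ <;> rcases hw1 with ⟨hk, hk'⟩ | ⟨hk, hk'⟩ <;>
    rcases hw2 with ⟨hl, hl'⟩ | ⟨hl, hl'⟩ <;> rw [hj] at heq hl <;> rw [hk', hl'] at heq <;>
    clear hj hk' hl'
  · have e : a * (1 - a) * (a * z - x) = x * (-((1 - a) * (a * (1 - a)))) := by
      linear_combination a * heq
    rcases hl with hl | hl
    · have := key _ _ _ e
      rw [eA1, eD1, hl] at this; omega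
    · have := key0 _ _ _ e hl
      omega
  · have e : a * (1 - b) * z = x * (b * ((1 - a) * (a ^ 2 - a - 1))) := by
      linear_combination heq - x * (2 * a - a ^ 2) * hab
    have := key _ _ _ e
    rw [eA2, eB2, hz] at this; omega
  · have e : (b - a ^ 2) * z = x * (b * (1 - a)) := by linear_combination heq
    have e' : (b - a ^ 2) * (z - (1 - a) * x) = x * (a * (a * (1 - a))) := by
      linear_combination heq
    have h1 := key _ _ _ e
    rw [eA3, hz] at h1
    rcases hk with hk | hk
    · have h2 := key _ _ _ e'
      rw [eC1, hk] at h2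
      have : σ = 0 := by linarith
      exact hσ0 this
    · have := key0 _ _ _ e' hk
      omega
  · have e : b * (1 - a) * (z - (1 - a) * x) = x * (-(b * (1 - a))) := by
      linear_combination heq - a * x * hab
    rcases hk with hk | hk
    · have := key _ _ _ e
      rw [eA3, eC4, hk] at this; omega
    · have := key0 _ _ _ e hk
      omega
  · have e : a * (1 - b) * z = x * (a * (1 - a)) := by linear_combination heq
    have := key _ _ _ e
    rw [eA2, eA1, hz] at this; omega
  · have e : (a - b ^ 2) * z = x * (b * ((1 - a) * (a ^ 2 - a - 1))) := by
      linear_combination heq - x * (2 * a - a ^ 2) * hab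
    have e' : (a - b ^ 2) * (z - (1 - a) * x) =
        x * (-(b * (b * ((1 - a) * (a ^ 2 + a - 1))))) := by
      linear_combination heq + x * (b - a - a ^ 2 * b) * hab
    have h1 := key _ _ _ e
    rw [eB2, hz] at h1
    rcases hk with hk | hk
    · have h2 := key _ _ _ e'
      rw [eC6, hk] at h2
      have : σ = 0 := by linarith
      exact hσ0 this
    · have := key0 _ _ _ e' hk
      omega
  · have e : b * (1 - a) * z = x * (b * (1 - a)) := by linear_combination heq
    have := key _ _ _ e
    rw [eA3, hz] at this; omega
  · have e : b * (1 - b) * z = x * (a * (1 - b)) := by linear_combination heq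
    have := key _ _ _ e
    rw [eA4, eA2, hz] at this; omega

theorem or_conv {P Q R A B : Prop} (h : A ∨ B) (h' : R ∨ P ∧ A ∨ Q ∧ B) :
    ((P ∨ R) ∧ A) ∨ ((Q ∨ R) ∧ B) := by tauto

/-- The quadratic orthomorphism. -/
def psi [DecidableEq K] (χ : MulChar K ℤ) (a b u : K) : K :=
  if χ u = -1 then b * u else a * u

set_option maxHeartbeats 1000000 in
theorem family [Finite K] (χ : MulChar K ℤ) (hχ : ∀ u : K, u ≠ 0 → χ u = 1 ∨ χ u = -1)
    (hm1 : χ (-1 : K) = 1) (a : K)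
    (ha : χ a = 1) (h1a : χ (1 - a) = -1)
    (hf : χ (a ^ 2 - a - 1) = -1) (hg : χ (a ^ 2 + a - 1) = -1) : Good (Nat.card K) := by
  classical
  have hneg : ∀ t : K, χ (-t) = χ t := by
    intro t; rw [neg_eq_neg_one_mul, map_mul, hm1, one_mul]
  have a0 : a ≠ 0 := by rintro rfl; rw [MulChar.map_zero] at ha; omega
  have a1 : 1 - a ≠ 0 := by intro h; rw [h, MulChar.map_zero] at h1a; omega
  obtain ⟨b, hab⟩ : ∃ b, a * b = 1 := ⟨a⁻¹, mul_inv_cancel₀ a0⟩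
  have b0 : b ≠ 0 := right_ne_zero_of_mul_eq_one hab
  have hb : χ b = 1 := by
    have := congrArg χ hab
    rw [map_mul, ha, map_one, one_mul] at this
    exact this
  have h1b : χ (1 - b) = -1 := by
    have : 1 - b = (-1) * ((1 - a) * b) := by linear_combination -hab
    rw [this, map_mul, map_mul, hm1, h1a, hb]; norm_num
  have b1 : 1 - b ≠ 0 := by intro h; rw [h, MulChar.map_zero] at h1b; omega
  have hfb : χ (b ^ 2 - b - 1) = -1 := by
    have : b ^ 2 - b - 1 = -(b * (b * (a ^ 2 + a - 1))) := by
      linear_combination (1 + a * b + b) * hab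
    rw [this, hneg, map_mul, map_mul, hb, hg]; norm_num
  have hgb : χ (b ^ 2 + b - 1) = -1 := by
    have : b ^ 2 + b - 1 = -(b * (b * (a ^ 2 - a - 1))) := by
      linear_combination (1 + a * b - b) * hab
    rw [this, hneg, map_mul, map_mul, hb, hf]; norm_num
  have hba : b * a = 1 := by rw [mul_comm]; exact hab
  -- values of psi
  have spec : ∀ u, ∃ c, psi χ a b u = c * u ∧ (c = a ∨ c = b) ∧
      (u = 0 ∨ χ u = 1 ∧ c = a ∨ χ u = -1 ∧ c = b) := by
    intro u
    by_cases hu : χ u = -1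
    · exact ⟨b, by simp [psi, hu], Or.inr rfl, Or.inr (Or.inr ⟨hu, rfl⟩)⟩
    · refine ⟨a, by simp [psi, hu], Or.inl rfl, ?_⟩
      by_cases h0 : u = 0
      · exact Or.inl h0
      · exact Or.inr (Or.inl ⟨(hχ u h0).resolve_right hu, rfl⟩)
  have c0 : ∀ c, c = a ∨ c = b → c ≠ 0 := by rintro c (rfl | rfl) <;> assumption
  have c1 : ∀ c, c = a ∨ c = b → 1 - c ≠ 0 := by rintro c (rfl | rfl) <;> assumption
  have z0 : ∀ u, χ u ≠ 0 → u ≠ 0 := by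
    intro u h h'; rw [h', MulChar.map_zero] at h; exact h rfl
  refine good_of_psi (psi χ a b) (by simp [psi]) ?_ ?_ ?_
  · intro u v h
    obtain ⟨c, hc, hc', hu⟩ := spec u
    obtain ⟨d, hd, hd', hv⟩ := spec v
    rw [hc, hd] at h
    have hcχ : χ c = 1 := by rcases hc' with rfl | rfl <;> assumption
    have hdχ : χ d = 1 := by rcases hd' with rfl | rfl <;> assumption
    have huv : χ u = χ v := by
      have := congrArg χ h
      rwa [map_mul, map_mul, hcχ, hdχ, one_mul, one_mul] at this
    by_cases hu0 : u = 0
    · rw [hu0, mul_zero, eq_comm, mul_eq_zero] at h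
      rw [hu0]; exact (h.resolve_left (c0 d hd')).symm
    by_cases hv0 : v = 0
    · rw [hv0, mul_zero, mul_eq_zero] at h
      rw [hv0]; exact (h.resolve_left (c0 c hc'))
    have : c = d := by
      rcases hu with hu | ⟨hu, rfl⟩ | ⟨hu, rfl⟩ <;> rcases hv with hv | ⟨hv, rfl⟩ | ⟨hv, rfl⟩ <;>
        first | rfl | contradiction | omega
    rw [this] at h
    exact mul_left_cancel₀ (c0 d hd') h
  · intro u v h
    simp only at h
    obtain ⟨c, hc, hc', hu⟩ := spec u
    obtain ⟨d, hd, hd', hv⟩ := spec v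
    rw [hc, hd] at h
    replace h : (1 - c) * u = (1 - d) * v := by linear_combination h
    have hcχ : χ (1 - c) = -1 := by rcases hc' with rfl | rfl <;> assumption
    have hdχ : χ (1 - d) = -1 := by rcases hd' with rfl | rfl <;> assumption
    have huv : χ u = χ v := by
      have := congrArg χ h
      rw [map_mul, map_mul, hcχ, hdχ] at this
      omega
    by_cases hu0 : u = 0
    · rw [hu0, mul_zero, eq_comm, mul_eq_zero] at h
      rw [hu0]; exact (h.resolve_left (c1 d hd')).symm
    by_cases hv0 : v = 0
    · rw [hv0, mul_zero, mul_eq_zero] at h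
      rw [hv0]; exact (h.resolve_left (c1 c hc'))
    have : c = d := by
      rcases hu with hu | ⟨hu, rfl⟩ | ⟨hu, rfl⟩ <;> rcases hv with hv | ⟨hv, rfl⟩ | ⟨hv, rfl⟩ <;>
        first | rfl | contradiction | omega
    rw [this] at h
    exact mul_left_cancel₀ (c1 d hd') h
  · intro x z h
    obtain ⟨ci, ei, hi', hi⟩ := spec (-x)
    obtain ⟨cj, ej, hj', hj⟩ := spec z
    rw [ei, ej] at h
    rw [show x + ci * -x = (1 - ci) * x by ring] at h
    obtain ⟨ck, ek, hk', hk⟩ := spec (z - (1 - ci) * x)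
    obtain ⟨cl, el, hl', hl⟩ := spec (cj * z - x)
    rw [ek, el] at h
    rw [hneg, neg_eq_zero] at hi
    by_cases hx0 : x = 0
    · refine ⟨hx0, ?_⟩
      by_contra hz0
      have e1 : ck = cj := by
        subst hx0
        rw [mul_zero, sub_zero] at hk
        rcases hk with hk | ⟨hk, hk2⟩ | ⟨hk, hk2⟩ <;>
        rcases hj with hj | ⟨hj, hj2⟩ | ⟨hj, hj2⟩ <;>
        first | contradiction | omega | (rw [hk2, hj2])
      rw [hx0, e1] at h
      have : (1 - cl) * (cj * z) = 0 := by linear_combination h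
      exact mul_ne_zero (c1 _ hl') (mul_ne_zero (c0 _ hj') hz0) this
    exfalso
    by_cases hz0 : z = 0
    · have e1 : cl = ci := by
        subst hz0
        rw [mul_zero, zero_sub, hneg, neg_eq_zero] at hl
        rcases hl with hk | ⟨hk, hk2⟩ | ⟨hk, hk2⟩ <;>
        rcases hi with hj | ⟨hj, hj2⟩ | ⟨hj, hj2⟩ <;>
        first | contradiction | omega | (rw [hk2, hj2])
      rw [hz0, e1] at h
      have : ck * ((1 - ci) * x) = 0 := by linear_combination -h
      exact mul_ne_zero (c0 _ hk') (mul_ne_zero (c1 _ hi') hx0) this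
    rcases hi with hi | ⟨hi, rfl⟩ | ⟨hi, rfl⟩
    · exact hx0 hi
    · refine kill χ ci b hab ha h1a hf hg hm1 1 one_ne_zero x z cj ck cl hi ?_ ?_ ?_ h
      · exact hj.resolve_left hz0
      · exact or_conv hk' hk
      · exact or_conv hl' hl
    · refine kill χ ci a hba hb h1b hfb hgb hm1 (-1) (by norm_num) x z cj ck cl hi ?_ ?_ ?_ h
      · rw [neg_neg]; exact (hj.resolve_left hz0).symm
      · rw [neg_neg]; exact (or_conv hk' hk).symm
      · rw [neg_neg]; exact (or_conv hl' hl).symm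

end family
end MaxNonassoc

namespace MaxNonassoc
open Polynomial

section stepanov

variable {K : Type} [Field K]

theorem not_sq_of_squarefree (f : K[X]) (hf : Squarefree f) (hd : f.natDegree ≠ 0) (c : K)
    (hc : c ≠ 0) : ∀ n : ℕ, ∀ r s : K[X], r.natDegree = n → r ^ 2 * f = C c * s ^ 2 → r = 0 := by
  have hu : ¬ IsUnit f := fun h => hd (natDegree_eq_zero_of_isUnit h)
  obtain ⟨π, hπ, hπf⟩ := WfDvdMonoid.exists_irreducible_factor hu hf.ne_zero
  have hπp : Prime π := hπ.prime
  have hπ0 : π ≠ 0 := hπ.ne_zero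
  have hπd : 0 < π.natDegree := hπ.natDegree_pos
  intro n
  induction n using Nat.strong_induction_on with
  | _ n ih =>
  intro r s hr h
  by_contra hr0
  have hCu : IsUnit (C c : K[X]) := isUnit_C.2 (isUnit_iff_ne_zero.2 hc)
  have h1 : π ∣ s := by
    have : π ∣ C c * s ^ 2 := h ▸ (dvd_mul_of_dvd_right hπf _)
    exact hπp.dvd_of_dvd_pow ((hCu.dvd_mul_left).1 this)
  obtain ⟨s', rfl⟩ := h1
  have h2 : π ∣ r := by
    have : π * π ∣ r ^ 2 * f := by rw [h]; exact ⟨C c * s' ^ 2, by ring⟩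
    exact hπp.dvd_of_dvd_pow (Squarefree.dvd_of_squarefree_of_mul_dvd_mul_left hf this)
  obtain ⟨r', rfl⟩ := h2
  have h3 : r' ^ 2 * f = C c * s' ^ 2 := by
    apply mul_left_cancel₀ (pow_ne_zero 2 hπ0)
    linear_combination h
  have hr'0 : r' ≠ 0 := right_ne_zero_of_mul hr0
  refine hr'0 (ih r'.natDegree ?_ r' s' rfl h3)
  rw [← hr, natDegree_mul hπ0 hr'0]; omega

/-- The first order operator sending u to f Du + l Df u. -/
noncomputable def op (f : K[X]) (l : K) : K[X] →ₗ[K] K[X] :=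
  (LinearMap.mulLeft K f) ∘ₗ derivative + LinearMap.mulLeft K (C l * derivative f)

theorem op_apply (f : K[X]) (l : K) (u : K[X]) :
    op f l u = f * derivative u + C l * derivative f * u := rfl

noncomputable def RR (f : K[X]) (l : K) : ℕ → (K[X] →ₗ[K] K[X])
  | 0 => LinearMap.id
  | k + 1 => op f (l - k) ∘ₗ RR f l k

theorem op_mem (f : K[X]) (l : K) (n : ℕ) (hm : 1 ≤ f.natDegree) (u : K[X])
    (hu : u ∈ degreeLT K n) : op f l u ∈ degreeLT K (n + (f.natDegree - 1)) := by
  rw [op_apply]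
  by_cases hu0 : u = 0
  · simp [hu0]
  have hlt : u.natDegree < n := by
    rw [mem_degreeLT, degree_eq_natDegree hu0] at hu
    exact_mod_cast hu
  have key : ∀ v : K[X], v.natDegree ≤ u.natDegree + (f.natDegree - 1) →
      v ∈ degreeLT K (n + (f.natDegree - 1)) := by
    intro v hv
    rw [mem_degreeLT]
    refine lt_of_le_of_lt degree_le_natDegree ?_
    exact_mod_cast (by omega : v.natDegree < n + (f.natDegree - 1))
  refine Submodule.add_mem _ ?_ ?_
  · by_cases h0 : u.natDegree = 0
    · rw [derivative_of_natDegree_zero h0]; simp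
    · apply key
      refine natDegree_mul_le.trans ?_
      have := natDegree_derivative_le u
      omega
  · apply key
    refine natDegree_mul_le.trans ?_
    have h1 : (C l * derivative f).natDegree ≤ f.natDegree - 1 :=
      (natDegree_C_mul_le _ _).trans (natDegree_derivative_le f)
    omega

theorem RR_mem (f : K[X]) (l : K) (n : ℕ) (hm : 1 ≤ f.natDegree) (u : K[X])
    (hu : u ∈ degreeLT K n) (k : ℕ) : RR f l k u ∈ degreeLT K (n + k * (f.natDegree - 1)) := by
  induction k with
  | zero => simpa [RR] using hu
  | succ k ih =>
    have := op_mem f (l - k) _ hm _ ih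
    rw [Nat.succ_mul, ← Nat.add_assoc]
    exact this

theorem op_iter (f : K[X]) (H : K[X]) (k : ℕ) :
    f ^ (k + 1) * derivative^[k + 1] H = op f (0 - k) (f ^ k * derivative^[k] H) := by
  rw [op_apply, Function.iterate_succ_apply', derivative_mul, derivative_pow]
  rcases k with _ | k
  · simp
  · simp only [Nat.add_sub_cancel, zero_sub, C_neg]
    ring

variable [Fintype K]

theorem half_cast (h2 : (2 : K) ≠ 0) : ((Fintype.card K / 2 : ℕ) : K) = -(1 / 2) := by
  have hodd : Fintype.card K % 2 = 1 := FiniteField.odd_card_of_char_ne_two (by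
    intro h
    apply h2
    have := ringChar.Nat.cast_ringChar (R := K)
    rw [h] at this
    exact_mod_cast this)
  have h := Nat.div_add_mod (Fintype.card K) 2
  have h' : ((2 * (Fintype.card K / 2) + Fintype.card K % 2 : ℕ) : K) = 0 := by
    rw [h]; exact Nat.cast_card_eq_zero K
  rw [hodd] at h'
  push_cast at h'
  field_simp
  linear_combination h'

theorem op_term (h2 : (2 : K) ≠ 0) (f : K[X]) (l : K) (r s : K[X]) (j : ℕ) :
    op f l ((r + s * f ^ (Fintype.card K / 2)) * X ^ (Fintype.card K * j)) =
      (op f l r + op f (-(1 / 2) + l) s * f ^ (Fintype.card K / 2)) * X ^ (Fintype.card K * j) := by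
  have hg : f * derivative (f ^ (Fintype.card K / 2)) =
      C (-(1 / 2)) * derivative f * f ^ (Fintype.card K / 2) := by
    have hpos : 0 < Fintype.card K / 2 := Nat.div_pos Fintype.one_lt_card two_pos
    obtain ⟨n, hn⟩ : ∃ n, Fintype.card K / 2 = n + 1 := ⟨_, (Nat.succ_pred_eq_of_pos hpos).symm⟩
    rw [derivative_pow, half_cast h2, hn]
    simp only [Nat.add_sub_cancel]
    ring
  have hX : derivative (X ^ (Fintype.card K * j) : K[X]) = 0 := by
    rw [derivative_X_pow]
    simp [Nat.cast_card_eq_zero]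
  simp only [op_apply, derivative_mul, derivative_add, hX, C_add]
  linear_combination (s * X ^ (Fintype.card K * j)) * hg

noncomputable def HH (f : K[X]) (J : ℕ) (r s : ℕ → K[X]) : K[X] :=
  ∑ j ∈ Finset.range J, (r j + s j * f ^ (Fintype.card K / 2)) * X ^ (Fintype.card K * j)

theorem HH_iter (h2 : (2 : K) ≠ 0) (f : K[X]) (J : ℕ) (r s : ℕ → K[X]) (k : ℕ) :
    f ^ k * derivative^[k] (HH f J r s) =
      HH f J (fun j => RR f 0 k (r j)) (fun j => RR f (-(1 / 2)) k (s j)) := by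
  induction k with
  | zero => simp [RR, HH]
  | succ k ih =>
    rw [op_iter, ih, HH, map_sum, HH]
    refine Finset.sum_congr rfl fun j _ => ?_
    rw [op_term h2]
    simp only [RR, LinearMap.comp_apply]
    rw [show (-(1 / 2) + (0 - (k : K))) = -(1 / 2) - (k : K) by ring]

theorem HH_ne_zero (f : K[X]) (hodd : Fintype.card K % 2 = 1) (D : ℕ)
    (hD : 2 * D + f.natDegree ≤ Fintype.card K + 1)
    (f0 : f.coeff 0 ≠ 0)
    (hsq : ∀ r s : K[X], r ^ 2 * f = C (f.coeff 0) * s ^ 2 → r = 0) (J : ℕ) :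
    ∀ (r s : ℕ → K[X]), (∀ j, r j ∈ degreeLT K D) → (∀ j, s j ∈ degreeLT K D) →
      HH f J r s = 0 → ∀ j < J, r j = 0 ∧ s j = 0 := by
  set q := Fintype.card K with hq
  have hXq : (X ^ q : K[X]) ≠ 0 := pow_ne_zero _ X_ne_zero
  have hDn : ∀ u ∈ degreeLT K D, u ≠ 0 → u.natDegree < D := by
    intro u hu hu0
    rw [mem_degreeLT, degree_eq_natDegree hu0] at hu
    exact_mod_cast hu
  induction J with
  | zero => intro r s _ _ _ j hj; omega
  | succ J ih =>
    intro r s hr hs h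
    have hsplit : HH f (J + 1) r s = (r 0 + s 0 * f ^ (q / 2)) +
        X ^ q * HH f J (fun j => r (j + 1)) (fun j => s (j + 1)) := by
      rw [HH, Finset.sum_range_succ', HH, Finset.mul_sum, add_comm]
      congr 1
      · simp [hq]
      · refine Finset.sum_congr rfl fun j _ => ?_
        rw [← hq]; ring
    rw [hsplit] at h
    have hfq : f * (f ^ (q / 2)) ^ 2 = expand K q f := by
      rw [hq, FiniteField.expand_card, ← pow_mul, ← pow_succ']
      congr 1; omega
    have hexp : X ^ q ∣ expand K q f - C (f.coeff 0) := by
      have h1 : X ∣ f - C (f.coeff 0) := by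
        rw [X_dvd_iff]; simp
      have h2 := map_dvd (expand K q) h1
      simpa using h2
    have hdvd : X ^ q ∣ (r 0) ^ 2 * f - C (f.coeff 0) * (s 0) ^ 2 := by
      have h1 : X ^ q ∣ r 0 + s 0 * f ^ (q / 2) :=
        ⟨-HH f J (fun j => r (j + 1)) (fun j => s (j + 1)), by linear_combination h⟩
      have h2 : (r 0) ^ 2 * f - C (f.coeff 0) * (s 0) ^ 2 =
          (r 0 + s 0 * f ^ (q / 2)) * (f * (r 0 - s 0 * f ^ (q / 2))) +
          (s 0) ^ 2 * (expand K q f - C (f.coeff 0)) := by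
        rw [← hfq]; ring
      rw [h2]
      exact dvd_add (dvd_mul_of_dvd_left h1 _) (dvd_mul_of_dvd_right hexp _)
    have hzero : (r 0) ^ 2 * f - C (f.coeff 0) * (s 0) ^ 2 = 0 := by
      apply eq_zero_of_dvd_of_degree_lt hdvd
      rw [degree_X_pow]
      have hqpos : 0 < q := Fintype.card_pos
      have e1 : ∀ u ∈ degreeLT K D, (u ^ 2).natDegree + 1 + f.natDegree ≤ q ∨ u = 0 := by
        intro u hu
        by_cases hu0 : u = 0
        · right; exact hu0
        · left
          have := hDn u hu hu0
          have := natDegree_pow_le (p := u) (n := 2)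
          omega
      refine lt_of_le_of_lt (degree_sub_le _ _) (max_lt ?_ ?_)
      · rcases e1 _ (hr 0) with h | h
        · refine lt_of_le_of_lt degree_le_natDegree ?_
          have := natDegree_mul_le (p := (r 0) ^ 2) (q := f)
          exact_mod_cast (by omega : ((r 0) ^ 2 * f).natDegree < q)
        · rw [h]; simp
      · rcases e1 _ (hs 0) with h | h
        · refine lt_of_le_of_lt degree_le_natDegree ?_
          have := natDegree_C_mul_le (f.coeff 0) ((s 0) ^ 2)
          exact_mod_cast (by omega : (C (f.coeff 0) * (s 0) ^ 2).natDegree < q)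
        · rw [h]; simp
    have hr0 : r 0 = 0 := hsq _ _ (sub_eq_zero.1 hzero)
    have hs0 : s 0 = 0 := by
      rw [hr0] at hzero
      simpa [f0] using hzero
    rw [hr0, hs0, zero_mul, add_zero, zero_add] at h
    have h' := (mul_eq_zero.1 h).resolve_left hXq
    have := ih (fun j => r (j + 1)) (fun j => s (j + 1)) (fun j => hr _) (fun j => hs _) h'
    intro j hj
    rcases j with _ | j
    · exact ⟨hr0, hs0⟩
    · exact this j (by omega)

theorem exists_aux (f : K[X]) (hm : 1 ≤ f.natDegree) (e : K) (M J D : ℕ)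
    (hcount : ∑ k ∈ Finset.range M, (D + k * (f.natDegree - 1) + J) < 2 * J * D) :
    ∃ r s : ℕ → K[X], (∀ j, r j ∈ degreeLT K D) ∧ (∀ j, s j ∈ degreeLT K D) ∧
      (∃ j < J, r j ≠ 0 ∨ s j ≠ 0) ∧
      ∀ k < M, ∑ j ∈ Finset.range J,
        (RR f 0 k (r j) + e • RR f (-(1 / 2)) k (s j)) * X ^ j = 0 := by
  let V := Fin J → (degreeLT K D × degreeLT K D)
  let n : Fin M → ℕ := fun k => D + k * (f.natDegree - 1) + J
  let φ : Fin M → (V →ₗ[K] K[X]) := fun k =>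
    ∑ j : Fin J, (LinearMap.mulRight K (X ^ (j : ℕ) : K[X])) ∘ₗ
      ((RR f 0 k) ∘ₗ (degreeLT K D).subtype ∘ₗ LinearMap.fst K _ _ +
        e • ((RR f (-(1 / 2)) k) ∘ₗ (degreeLT K D).subtype ∘ₗ LinearMap.snd K _ _)) ∘ₗ
      LinearMap.proj j
  have hφ : ∀ k v, φ k v = ∑ j : Fin J,
      (RR f 0 k (v j).1 + e • RR f (-(1 / 2)) k (v j).2) * X ^ (j : ℕ) := by
    intro k v
    simp only [φ, LinearMap.sum_apply]
    rfl
  have hmem : ∀ k v, φ k v ∈ degreeLT K (n k) := by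
    intro k v
    rw [hφ]
    refine Submodule.sum_mem _ fun j _ => ?_
    have h1 := RR_mem f 0 D hm _ (v j).1.2 k
    have h2 := RR_mem f (-(1 / 2)) D hm _ (v j).2.2 k
    have h3 := Submodule.add_mem _ h1 (Submodule.smul_mem _ e h2)
    rw [mem_degreeLT] at h3 ⊢
    by_cases h0 : (RR f 0 k (v j).1 + e • RR f (-(1 / 2)) k (v j).2 : K[X]) = 0
    · rw [h0, zero_mul, degree_zero]; exact WithBot.bot_lt_coe _
    · have h4 : (RR f 0 k (v j).1 + e • RR f (-(1 / 2)) k (v j).2 : K[X]).natDegree <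
          D + k * (f.natDegree - 1) := by
        rw [degree_eq_natDegree h0] at h3
        exact_mod_cast h3
      refine lt_of_le_of_lt degree_le_natDegree ?_
      have h5 := natDegree_mul_le
        (p := (RR f 0 k (v j).1 + e • RR f (-(1 / 2)) k (v j).2 : K[X])) (q := X ^ (j : ℕ))
      rw [natDegree_X_pow] at h5
      have := j.2
      exact_mod_cast (by simp only [n]; omega : _ < n k)
  let Φ : V →ₗ[K] ((k : Fin M) → degreeLT K (n k)) :=
    LinearMap.pi fun k => LinearMap.codRestrict (degreeLT K (n k)) (φ k) (hmem k)
  have fr : ∀ N, Module.finrank K (degreeLT K N) = N := by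
    intro N
    rw [LinearEquiv.finrank_eq (degreeLTEquiv K N)]; simp
  have : ∀ N, Module.Finite K (degreeLT K N) := fun N =>
    Module.Finite.equiv (degreeLTEquiv K N).symm
  have hker : LinearMap.ker Φ ≠ ⊥ := by
    apply LinearMap.ker_ne_bot_of_finrank_lt
    simp only [V, Module.finrank_pi_fintype, Module.finrank_prod, fr, n]
    rw [Finset.sum_const, Finset.card_univ, Fintype.card_fin, smul_eq_mul,
      Fin.sum_univ_eq_sum_range (fun k => D + k * (f.natDegree - 1) + J)]
    calc _ < _ := hcount
      _ = _ := by ring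
  obtain ⟨v, hv, hv0⟩ := Submodule.exists_mem_ne_zero_of_ne_bot hker
  have hv' : ∀ k, φ k v = 0 := by
    intro k
    have h := congrFun (LinearMap.mem_ker.1 hv) k
    exact congrArg Subtype.val h
  refine ⟨fun j => if h : j < J then (v ⟨j, h⟩).1 else 0,
    fun j => if h : j < J then (v ⟨j, h⟩).2 else 0, ?_, ?_, ?_, ?_⟩
  · intro j
    dsimp only
    split_ifs with h
    · exact (v ⟨j, h⟩).1.2
    · exact Submodule.zero_mem _
  · intro j
    dsimp only
    split_ifs with h
    · exact (v ⟨j, h⟩).2.2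
    · exact Submodule.zero_mem _
  · by_contra! hcon
    apply hv0
    funext j
    have := hcon j j.2
    simp only [j.2, dif_pos] at this
    exact Prod.ext (Subtype.ext this.1) (Subtype.ext this.2)
  · intro k hk
    have h := hv' ⟨k, hk⟩
    rw [hφ] at h
    refine Eq.trans ?_ h
    dsimp only
    rw [← Fin.sum_univ_eq_sum_range (fun j =>
      (RR f 0 k (if h : j < J then ((v ⟨j, h⟩).1 : K[X]) else 0) +
        e • RR f (-(1 / 2)) k (if h : j < J then ((v ⟨j, h⟩).2 : K[X]) else 0)) * X ^ j)]
    refine Finset.sum_congr rfl fun j _ => ?_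
    simp

theorem stepanov [DecidableEq K] (p : ℕ) [Fact p.Prime] [CharP K p]
    (f : K[X]) (hodd : Fintype.card K % 2 = 1)
    (hm : 1 ≤ f.natDegree) (e : K) (he : e ≠ 0) (M J D : ℕ) (hMp : M ≤ p)
    (hcount : ∑ k ∈ Finset.range M, (D + k * (f.natDegree - 1) + J) < 2 * J * D)
    (hD : 2 * D + f.natDegree ≤ Fintype.card K + 1)
    (f0 : f.coeff 0 ≠ 0) (hsf : Squarefree f) :
    (Finset.univ.filter fun x : K => (f.eval x) ^ (Fintype.card K / 2) = e).card * M ≤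
      D + f.natDegree * (Fintype.card K / 2) + Fintype.card K * (J - 1) := by
  rcases Nat.eq_zero_or_pos M with hM0 | hM0
  · simp [hM0]
  have h2 : (2 : K) ≠ 0 := by
    intro h
    have h' := Nat.cast_card_eq_zero K
    have hd := Nat.div_add_mod (Fintype.card K) 2
    rw [← hd, hodd] at h'
    push_cast at h'
    rw [h] at h'
    simp at h'
  obtain ⟨r, s, hr, hs, ⟨j0, hj0, hne⟩, hP⟩ := exists_aux f hm e M J D hcount
  have hH : HH f J r s ≠ 0 := by
    intro h
    have := HH_ne_zero f hodd D hD f0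
      (fun r s h => not_sq_of_squarefree f hsf (by omega) _ f0 _ r s rfl h) J r s hr hs h j0 hj0
    rcases hne with h | h
    · exact h this.1
    · exact h this.2
  have hmult : ∀ x ∈ (Finset.univ.filter fun x : K => (f.eval x) ^ (Fintype.card K / 2) = e),
      M ≤ (HH f J r s).rootMultiplicity x := by
    intro x hx
    rw [Finset.mem_filter] at hx
    have hfx : f.eval x ≠ 0 := by
      intro h
      have hpos : 0 < Fintype.card K / 2 := Nat.div_pos Fintype.one_lt_card two_pos
      rw [h, zero_pow hpos.ne'] at hx
      exact he hx.2.symm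
    have hlt := lt_rootMultiplicity_of_isRoot_iterate_derivative_of_mem_nonZeroDivisors'
      (n := M - 1) (t := x) hH ?_ ?_
    · omega
    · intro k hk
      have h1 := congrArg (eval x) (HH_iter h2 f J r s k)
      have h3 := congrArg (eval x) (hP k (by omega))
      rw [eval_finsetSum] at h3
      rw [eval_mul, eval_pow] at h1
      have h4 : eval x (HH f J (fun j => RR f 0 k (r j))
          (fun j => RR f (-(1 / 2)) k (s j))) = 0 := by
        rw [eval_zero] at h3
        rw [HH, eval_finsetSum]
        refine Eq.trans ?_ h3
        refine Finset.sum_congr rfl fun j _ => ?_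
        simp only [eval_mul, eval_add, eval_pow, eval_X, eval_smul, smul_eq_mul, hx.2]
        rw [pow_mul, FiniteField.pow_card]
        ring
      rw [h4] at h1
      exact (mul_eq_zero.1 h1).resolve_left (pow_ne_zero _ hfx)
    · intro k hk hk0
      apply mem_nonZeroDivisors_of_ne_zero
      intro h
      rw [CharP.cast_eq_zero_iff K p] at h
      have := Nat.le_of_dvd (Nat.pos_of_ne_zero hk0) h
      omega
  set S := (Finset.univ.filter fun x : K => (f.eval x) ^ (Fintype.card K / 2) = e) with hS
  have hle : M • S.val ≤ (HH f J r s).roots := by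
    rw [Multiset.le_iff_count]
    intro x
    rw [Multiset.count_nsmul, count_roots]
    by_cases hx : x ∈ S
    · have h1 : Multiset.count x S.val = 1 := Multiset.count_eq_one_of_mem S.nodup hx
      rw [h1]
      simpa using hmult x hx
    · have h1 : Multiset.count x S.val = 0 := Multiset.count_eq_zero_of_notMem hx
      rw [h1]; simp
  have h5 := (Multiset.card_le_card hle).trans (card_roots' _)
  rw [Multiset.card_nsmul, Finset.card_val] at h5
  rw [mul_comm]
  refine h5.trans ?_
  rw [HH]
  refine natDegree_sum_le_of_forall_le _ _ fun j hj => ?_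
  rw [Finset.mem_range] at hj
  refine natDegree_mul_le.trans ?_
  rw [natDegree_X_pow]
  refine Nat.add_le_add ?_ (Nat.mul_le_mul_left _ (by omega))
  have hn : ∀ u ∈ degreeLT K D, u.natDegree ≤ D := by
    intro u hu
    rw [mem_degreeLT] at hu
    exact natDegree_le_of_degree_le hu.le
  refine (natDegree_add_le _ _).trans (max_le ?_ ?_)
  · exact (hn _ (hr j)).trans (Nat.le_add_right _ _)
  · refine natDegree_mul_le.trans (Nat.add_le_add (hn _ (hs j)) ?_)
    refine natDegree_pow_le.trans ?_
    rw [mul_comm]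

end stepanov
end MaxNonassoc

namespace MaxNonassoc
open Polynomial

section charsum

variable {K : Type} [Field K] [Fintype K] [DecidableEq K]

theorem arith_aux (q D J T m L : ℤ) (hm : 0 ≤ m) (hm5 : m ≤ 5) (hL : 113 ≤ L)
    (b1 : q ≤ 2 * D + (m + 1)) (b2 : L + 1 + (m + 1) + 1 ≤ 2 * J)
    (b3 : 2 * J ≤ L + 1 + (m + 1) + 2) (hMq : (L + 1) * (L + 1) ≤ q)
    (h2 : T * 2 = (L + 1) * L) (hmq : m + 1 ≤ q) :
    (L + 1) * D + T * m + (L + 1) * J < 2 * J * D := by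
  obtain ⟨u, hu⟩ : ∃ u : ℤ, u = 2 * J - (L + 1) := ⟨_, rfl⟩
  have c1 : (m + 2) * (q - (m + 1)) ≤ u * (2 * D) :=
    mul_le_mul (by linarith) (by linarith) (by linarith) (by linarith)
  have c2 : (L + 1) * (2 * J) ≤ (L + 1) * (L + 1 + (m + 1) + 2) :=
    mul_le_mul_of_nonneg_left b3 (by linarith)
  have c3 : (m + 2) * ((L + 1) * (L + 1)) ≤ (m + 2) * q :=
    mul_le_mul_of_nonneg_left hMq (by linarith)
  have c4 : u * (2 * D) = 2 * (2 * J * D) - 2 * ((L + 1) * D) := by rw [hu]; ring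
  have c5 : T * m * 2 = (L + 1) * L * m := by rw [← h2]; ring
  have c6 : m * m ≤ 25 := by nlinarith
  have c7 : 113 * L ≤ L * L := mul_le_mul_of_nonneg_right hL (by linarith)
  linarith

theorem count_bound (p : ℕ) [Fact p.Prime] [CharP K p]
    (f : K[X]) (hodd : Fintype.card K % 2 = 1) (m M : ℕ) (hfm : f.natDegree = m)
    (hm : 1 ≤ m) (hm6 : m ≤ 6) (e : K) (he : e ≠ 0) (hM : 114 ≤ M) (hMp : M ≤ p)
    (hMq : M * M ≤ Fintype.card K) (hqM : Fintype.card K ≤ M * (M + 2))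
    (f0 : f.coeff 0 ≠ 0) (hsf : Squarefree f) :
    2 * (Finset.univ.filter fun x : K => (f.eval x) ^ (Fintype.card K / 2) = e).card ≤
      Fintype.card K + (2 * m + 1) * (M + 2) := by
  obtain ⟨D, hD⟩ : ∃ D, D = (Fintype.card K + 1 - m) / 2 := ⟨_, rfl⟩
  obtain ⟨J, hJ⟩ : ∃ J, J = (M + m) / 2 + 1 := ⟨_, rfl⟩
  have hst := stepanov p f hodd (by omega) e he M J D hMp ?_ ?_ f0 hsf
  · rw [hfm] at hst
    generalize (Finset.univ.filter fun x : K => (f.eval x) ^ (Fintype.card K / 2) = e).card = N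
      at hst ⊢
    generalize Fintype.card K = q at *
    have h1 : 2 * (N * M) ≤ q + m * q + q * (M + m) := by
      have a1 : 2 * D ≤ q := by omega
      have a2 : m * (2 * (q / 2)) ≤ m * q := Nat.mul_le_mul_left _ (by omega)
      have a3 : q * (2 * (J - 1)) ≤ q * (M + m) := Nat.mul_le_mul_left _ (by omega)
      nlinarith
    have h2 : (2 * m + 1) * q ≤ (2 * m + 1) * (M * (M + 2)) := Nat.mul_le_mul_left _ hqM
    have h3 : M * (2 * N) ≤ M * (q + (2 * m + 1) * (M + 2)) := by nlinarith
    exact Nat.le_of_mul_le_mul_left h3 (by omega)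
  · rw [hfm]
    generalize Fintype.card K = q at *
    have hs : ∑ k ∈ Finset.range M, (D + k * (m - 1) + J) =
        M * D + (∑ k ∈ Finset.range M, k) * (m - 1) + M * J := by
      rw [Finset.sum_add_distrib, Finset.sum_add_distrib, Finset.sum_mul]
      simp
    have h2 := Finset.sum_range_id_mul_two M
    rw [hs]
    generalize ∑ k ∈ Finset.range M, k = T at *
    have b4 : m ≤ q := by nlinarith
    have b1 : q ≤ 2 * D + m := by omega
    have b2 : M + m + 1 ≤ 2 * J := by omega
    have b3 : 2 * J ≤ M + m + 2 := by omega
    obtain ⟨n, rfl⟩ := Nat.exists_eq_add_of_le' hm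
    obtain ⟨L, rfl⟩ := Nat.exists_eq_add_of_le' (show 1 ≤ M by omega)
    simp only [Nat.add_sub_cancel] at h2 ⊢
    clear hD hJ hs hsf f0 he hfm
    exact_mod_cast arith_aux (q : ℤ) D J T n L (by omega) (by omega) (by omega)
      (by exact_mod_cast b1) (by exact_mod_cast b2) (by exact_mod_cast b3)
      (by exact_mod_cast hMq) (by exact_mod_cast h2) (by exact_mod_cast b4)
  · rw [hfm]
    have : m ≤ Fintype.card K := by nlinarith
    omega

theorem charsum_bound (p : ℕ) [Fact p.Prime] [CharP K p]
    (f : K[X]) (hodd : Fintype.card K % 2 = 1) (m M : ℕ) (hfm : f.natDegree = m)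
    (hm : 1 ≤ m) (hm6 : m ≤ 6) (hM : 114 ≤ M) (hMp : M ≤ p)
    (hMq : M * M ≤ Fintype.card K) (hqM : Fintype.card K ≤ M * (M + 2))
    (f0 : f.coeff 0 ≠ 0) (hsf : Squarefree f) :
    |∑ x : K, quadraticChar K (f.eval x)| ≤ (2 * m + 1) * (M + 2) + m := by
  have hc : ringChar K ≠ 2 := by
    intro h
    have := FiniteField.even_card_iff_char_two.1 h
    omega
  have hb1 := count_bound p f hodd m M hfm hm hm6 1 one_ne_zero hM hMp hMq hqM f0 hsf
  have hb2 := count_bound p f hodd m M hfm hm hm6 (-1) (neg_ne_zero.2 one_ne_zero)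
    hM hMp hMq hqM f0 hsf
  have hz : (Finset.univ.filter fun x : K => f.eval x = 0).card ≤ m := by
    have hf : f ≠ 0 := hsf.ne_zero
    refine le_trans ?_ ((Multiset.toFinset_card_le _).trans (hfm ▸ card_roots' f))
    refine Finset.card_le_card fun x hx => ?_
    rw [Multiset.mem_toFinset, mem_roots hf]
    exact (Finset.mem_filter.1 hx).2
  have key : ∀ x : K, (quadraticChar K (f.eval x) : ℤ) =
      2 * (if (f.eval x) ^ (Fintype.card K / 2) = 1 then 1 else 0) - 1
        + (if f.eval x = 0 then 1 else 0) ∧ (quadraticChar K (f.eval x) : ℤ) =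
      1 - 2 * (if (f.eval x) ^ (Fintype.card K / 2) = -1 then 1 else 0)
        - (if f.eval x = 0 then 1 else 0) := by
    intro x
    have hpos : Fintype.card K / 2 ≠ 0 := (Nat.div_pos Fintype.one_lt_card two_pos).ne'
    have h11 : (1 : K) ≠ -1 := (Ring.neg_one_ne_one_of_char_ne_two hc).symm
    by_cases h0 : f.eval x = 0
    · rw [h0]
      simp [hpos, zero_pow]
    · rw [← quadraticChar_eq_pow_of_char_ne_two' hc]
      rcases quadraticChar_dichotomy h0 with h | h <;> simp [h, h0, h11, h11.symm]
  have s1 : ∑ x : K, (quadraticChar K (f.eval x) : ℤ) =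
      2 * (Finset.univ.filter fun x : K => (f.eval x) ^ (Fintype.card K / 2) = 1).card
        - Fintype.card K + (Finset.univ.filter fun x : K => f.eval x = 0).card := by
    rw [Finset.sum_congr rfl fun x _ => (key x).1]
    rw [Finset.sum_add_distrib, Finset.sum_sub_distrib, ← Finset.mul_sum, Finset.sum_boole,
      Finset.sum_boole]
    simp
  have s2 : ∑ x : K, (quadraticChar K (f.eval x) : ℤ) =
      Fintype.card K -
      2 * (Finset.univ.filter fun x : K => (f.eval x) ^ (Fintype.card K / 2) = -1).card
        - (Finset.univ.filter fun x : K => f.eval x = 0).card := by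
    rw [Finset.sum_congr rfl fun x _ => (key x).2]
    rw [Finset.sum_sub_distrib, Finset.sum_sub_distrib, ← Finset.mul_sum, Finset.sum_boole,
      Finset.sum_boole]
    simp
  zify at hb1 hb2 hz
  rw [abs_le]
  constructor
  · rw [s2]; linarith
  · rw [s1]; linarith

end charsum
end MaxNonassoc

namespace MaxNonassoc
open Polynomial

section large

variable {K : Type} [Field K] [Fintype K] [DecidableEq K]

def dd : Fin 4 → ℕ := ![1, 1, 2, 2]

theorem exists_signs (p : ℕ) [Fact p.Prime] [CharP K p] (hodd : Fintype.card K % 2 = 1) (M : ℕ)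
    (hM : 115 ≤ M) (hMp : M ≤ p)
    (hMq : M * M ≤ Fintype.card K) (hqM : Fintype.card K ≤ M * (M + 2))
    (F : Fin 4 → K[X]) (hmon : ∀ i, (F i).Monic) (hdeg : ∀ i, (F i).natDegree = dd i)
    (h0 : ∀ i, (F i).coeff 0 ≠ 0) (hsf : ∀ i, Squarefree (F i))
    (hcop : Pairwise fun i j => IsCoprime (F i) (F j))
    (ε : Fin 4 → ℤ) (hε : ∀ i, ε i = 1 ∨ ε i = -1) :
    ∃ x : K, ∀ i, quadraticChar K ((F i).eval x) = ε i := by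
  by_contra! hcon
  have hε2 : ∀ i, |ε i| = 1 := fun i => by rcases hε i with h | h <;> simp [h]
  have hχ : ∀ u : K, |quadraticChar K u| ≤ 1 := fun u => by
    by_cases hu : u = 0
    · simp [hu]
    · rcases quadraticChar_dichotomy hu with h | h <;> simp [h]
  have hP : ∀ x : K, ∏ i, (1 + ε i * quadraticChar K ((F i).eval x)) ≤
      16 * (if (∏ i, F i).eval x = 0 then 1 else 0) := by
    intro x
    have hb : ∀ i, 0 ≤ 1 + ε i * quadraticChar K ((F i).eval x) ∧
        1 + ε i * quadraticChar K ((F i).eval x) ≤ 2 := by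
      intro i
      have : |ε i * quadraticChar K ((F i).eval x)| ≤ 1 := by
        rw [abs_mul, hε2, one_mul]; exact hχ _
      rw [abs_le] at this
      constructor <;> linarith [this.1, this.2]
    split_ifs with hx
    · calc _ ≤ ∏ i : Fin 4, (2 : ℤ) := Finset.prod_le_prod (fun i _ => (hb i).1) fun i _ => (hb i).2
        _ = _ := by simp
    · rw [eval_prod, ← ne_eq, Finset.prod_ne_zero_iff] at hx
      obtain ⟨i, hi⟩ := hcon x
      apply le_of_eq
      rw [mul_zero]
      refine Finset.prod_eq_zero (Finset.mem_univ i) ?_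
      rcases quadraticChar_dichotomy (hx i (Finset.mem_univ i)) with h | h <;>
        rcases hε i with h' | h' <;> simp_all
  have hsum := Finset.sum_le_sum fun (x : K) (_ : x ∈ Finset.univ) => hP x
  rw [← Finset.mul_sum, Finset.sum_boole] at hsum
  have hdegp : ∀ S : Finset (Fin 4), (∏ i ∈ S, F i).natDegree = ∑ i ∈ S, dd i := by
    intro S
    rw [natDegree_prod_of_monic _ _ fun i _ => hmon i]
    exact Finset.sum_congr rfl fun i _ => hdeg i
  have hz : (Finset.univ.filter fun x : K => (∏ i, F i).eval x = 0).card ≤ 6 := by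
    have hf : (∏ i, F i) ≠ 0 := (monic_prod_of_monic _ _ fun i _ => hmon i).ne_zero
    have h6 : (∏ i, F i).natDegree = 6 := by rw [hdegp]; decide
    refine le_trans ?_ ((Multiset.toFinset_card_le _).trans (h6 ▸ card_roots' _))
    refine Finset.card_le_card fun x hx => ?_
    rw [Multiset.mem_toFinset, mem_roots hf]
    exact (Finset.mem_filter.1 hx).2
  have hexp : ∑ x : K, ∏ i, (1 + ε i * quadraticChar K ((F i).eval x)) =
      ∑ S : Finset (Fin 4), (∏ i ∈ S, ε i) * ∑ x : K, quadraticChar K ((∏ i ∈ S, F i).eval x) := by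
    simp_rw [Finset.prod_one_add, Finset.mul_sum]
    rw [Finset.sum_comm, Finset.powerset_univ]
    refine Finset.sum_congr rfl fun S _ => Finset.sum_congr rfl fun x _ => ?_
    rw [Finset.prod_mul_distrib, eval_prod, map_prod]
  have hb : ∀ S ∈ (Finset.univ : Finset (Finset (Fin 4))).erase ∅,
      -((2 * (∑ i ∈ S, dd i : ℕ) + 1) * ((M : ℤ) + 2) + (∑ i ∈ S, dd i : ℕ)) ≤
      (∏ i ∈ S, ε i) * ∑ x : K, quadraticChar K ((∏ i ∈ S, F i).eval x) := by
    intro S hS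
    have hS : S ≠ ∅ := (Finset.mem_erase.1 hS).1
    have h1 : ∀ S : Finset (Fin 4), S ≠ ∅ → 1 ≤ ∑ i ∈ S, dd i ∧ ∑ i ∈ S, dd i ≤ 6 := by decide
    have h2 := charsum_bound p (∏ i ∈ S, F i) hodd _ M (hdegp S) (h1 S hS).1 (h1 S hS).2
      (by omega) hMp hMq hqM ?_ ?_
    · have h3 : |(∏ i ∈ S, ε i) * ∑ x : K, quadraticChar K ((∏ i ∈ S, F i).eval x)| ≤
          (2 * (∑ i ∈ S, dd i : ℕ) + 1) * ((M : ℤ) + 2) + (∑ i ∈ S, dd i : ℕ) := by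
        rw [abs_mul, Finset.abs_prod, Finset.prod_congr rfl fun i _ => hε2 i]
        simpa using h2
      exact (abs_le.1 h3).1
    · rw [coeff_zero_eq_eval_zero, eval_prod, Finset.prod_ne_zero_iff]
      intro i _
      rw [← coeff_zero_eq_eval_zero]
      exact h0 i
    · exact Finset.squarefree_prod_of_pairwise_isCoprime
        (fun i _ j _ hij => (hcop hij).isRelPrime) fun i _ => hsf i
  have hb2 := Finset.sum_le_sum hb
  rw [hexp, ← Finset.add_sum_erase _ _ (Finset.mem_univ ∅)] at hsum
  have e1 : ∑ S ∈ (Finset.univ : Finset (Finset (Fin 4))).erase ∅,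
      -((2 * (∑ i ∈ S, dd i : ℕ) + 1) * ((M : ℤ) + 2) + (∑ i ∈ S, dd i : ℕ)) =
      -(111 * (M + 2) + 48) := by
    have e2 : ∑ S ∈ (Finset.univ : Finset (Finset (Fin 4))).erase ∅, (∑ i ∈ S, dd i) = 48 := by
      decide
    have e3 : ∑ S ∈ (Finset.univ : Finset (Finset (Fin 4))).erase ∅, (2 * (∑ i ∈ S, dd i) + 1)
        = 111 := by decide
    rw [Finset.sum_neg_distrib, Finset.sum_add_distrib, ← Finset.sum_mul]
    zify at e2 e3
    push_cast at *
    rw [e2, e3]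
  rw [e1] at hb2
  have hq : ((M : ℤ) * M) ≤ Fintype.card K := by exact_mod_cast hMq
  have hM' : (115 : ℤ) ≤ M := by exact_mod_cast hM
  have hz' : (((Finset.univ.filter fun x : K => (∏ i, F i).eval x = 0).card : ℕ) : ℤ) ≤ 6 := by
    exact_mod_cast hz
  simp only [Finset.prod_empty, eval_one, map_one, Finset.sum_const, Finset.card_univ, one_mul,
    nsmul_eq_mul, mul_one] at hsum
  nlinarith

theorem good_large (p : ℕ) [Fact p.Prime] [CharP K p]
    (hmod : Fintype.card K % 4 = 1) (M : ℕ)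
    (hM : 115 ≤ M) (hMp : M ≤ p)
    (hMq : M * M ≤ Fintype.card K) (hqM : Fintype.card K ≤ M * (M + 2)) :
    Good (Fintype.card K) := by
  have hcne : ∀ n : ℕ, n.Prime → n ≠ p → (n : K) ≠ 0 := by
    intro n hn hnp h
    rw [CharP.cast_eq_zero_iff K p] at h
    exact hnp ((Nat.prime_dvd_prime_iff_eq Fact.out hn).1 h).symm
  have h2 : (2 : K) ≠ 0 := by exact_mod_cast hcne 2 Nat.prime_two (by omega)
  have h5 : (5 : K) ≠ 0 := by exact_mod_cast hcne 5 Nat.prime_five (by omega)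
  have hc : ringChar K ≠ 2 := by
    intro h
    have := FiniteField.even_card_iff_char_two.1 h
    omega
  have hm1 : quadraticChar K (-1) = 1 := by
    rw [quadraticChar_neg_one hc, ZMod.χ₄_nat_one_mod_four hmod]
  have hC2 : (C (1 / 2) : K[X]) * 2 = 1 := by
    rw [show (2 : K[X]) = C 2 from rfl, ← C_mul, one_div, inv_mul_cancel₀ h2, C_1]
  have hC5 : (C (1 / 5) : K[X]) * 5 = 1 := by
    rw [show (5 : K[X]) = C 5 from rfl, ← C_mul, one_div, inv_mul_cancel₀ h5, C_1]
  have hsep : ∀ f g : K[X], f.derivative = g → g ^ 2 - 4 * f = 5 → Squarefree f := by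
    intro f g hg h
    apply Separable.squarefree
    refine ⟨C (1 / 5) * (-4), C (1 / 5) * g, ?_⟩
    rw [hg]
    linear_combination C (1 / 5) * h + hC5
  have hex := exists_signs p (by omega) M hM hMp hMq hqM
    (![X - C 1, X - C 2, X ^ 2 - 3 * X + 1, X ^ 2 - X - 1] : Fin 4 → K[X]) ?_ ?_ ?_ ?_ ?_
    ![1, -1, -1, -1] ?_
  · obtain ⟨x, hx⟩ := hex
    have x0 := hx 0
    have x1 := hx 1
    have x2 := hx 2
    have x3 := hx 3
    simp [-quadraticChar_apply] at x0 x1 x2 x3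
    rw [← Nat.card_eq_fintype_card]
    refine family (quadraticChar K) (fun u hu => quadraticChar_dichotomy hu) hm1 (x - 1) x0 ?_ ?_ ?_
    · rw [show 1 - (x - 1) = (-1) * (x - 2) by ring, map_mul, hm1, x1]; rfl
    · rw [← x2]; congr 1; ring
    · rw [← x3]; congr 1; ring
  · intro i
    fin_cases i
    · exact monic_X_sub_C 1
    · exact monic_X_sub_C 2
    · show (X ^ 2 - 3 * X + 1 : K[X]).Monic
      monicity!
    · show (X ^ 2 - X - 1 : K[X]).Monic
      monicity!
  · intro i
    fin_cases i
    · exact natDegree_X_sub_C 1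
    · exact natDegree_X_sub_C 2
    · show (X ^ 2 - 3 * X + 1 : K[X]).natDegree = 2
      compute_degree!
    · show (X ^ 2 - X - 1 : K[X]).natDegree = 2
      compute_degree!
  · intro i
    rw [coeff_zero_eq_eval_zero]
    fin_cases i <;> simp [h2]
  · intro i
    fin_cases i
    · exact (irreducible_X_sub_C 1).squarefree
    · exact (irreducible_X_sub_C 2).squarefree
    · refine hsep (X ^ 2 - 3 * X + 1) (2 * X - 3) ?_ ?_
      · simp; norm_num
      · ring
    · refine hsep (X ^ 2 - X - 1) (2 * X - 1) ?_ ?_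
      · simp; norm_num
      · ring
  · have c01 : IsCoprime (X - C 1 : K[X]) (X - C 2) :=
      ⟨1, -1, by rw [show (C 1 : K[X]) = 1 from rfl, show (C 2 : K[X]) = 2 from rfl]; ring⟩
    have c02 : IsCoprime (X - C 1 : K[X]) (X ^ 2 - 3 * X + 1) :=
      ⟨X - 2, -1, by rw [show (C 1 : K[X]) = 1 from rfl]; ring⟩
    have c03 : IsCoprime (X - C 1 : K[X]) (X ^ 2 - X - 1) :=
      ⟨X, -1, by rw [show (C 1 : K[X]) = 1 from rfl]; ring⟩
    have c12 : IsCoprime (X - C 2 : K[X]) (X ^ 2 - 3 * X + 1) :=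
      ⟨X - 1, -1, by rw [show (C 2 : K[X]) = 2 from rfl]; ring⟩
    have c13 : IsCoprime (X - C 2 : K[X]) (X ^ 2 - X - 1) :=
      ⟨-(X + 1), 1, by rw [show (C 2 : K[X]) = 2 from rfl]; ring⟩
    have c23 : IsCoprime (X ^ 2 - 3 * X + 1 : K[X]) (X ^ 2 - X - 1) :=
      ⟨-(C (1 / 2) * X), C (1 / 2) * X - 1, by linear_combination (X ^ 2 - X) * hC2⟩
    intro i j hij
    fin_cases i <;> fin_cases j
    · exact absurd rfl hij
    · exact c01
    · exact c02
    · exact c03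
    · exact c01.symm
    · exact absurd rfl hij
    · exact c12
    · exact c13
    · exact c02.symm
    · exact c12.symm
    · exact absurd rfl hij
    · exact c23
    · exact c03.symm
    · exact c13.symm
    · exact c23.symm
    · exact absurd rfl hij
  · decide

end large
end MaxNonassoc

namespace MaxNonassoc

theorem injective_of_left {α : Type} (f g : α → α) (h : ∀ x, g (f x) = x) :
    Function.Injective f := Function.LeftInverse.injective h

def psi17 (u : ZMod 17) : ZMod 17 := if u ^ 8 = 16 then 8 * u else 4 * u

theorem good17 : Good 17 := by
  have h := good_of_psi psi17 (by decide +kernel) (by decide +kernel) (by decide +kernel)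
    (by decide +kernel)
  simpa using h

def psi25 (u : ZMod 5 × ZMod 5) : ZMod 5 × ZMod 5 :=
  let n := u.1 * u.1 - 2 * (u.2 * u.2)
  if n = 2 ∨ n = 3 then (u.2, 3 * u.1) else (4 * u.2, 2 * u.1)

theorem good25 : Good 25 := by
  have h := good_of_psi psi25 (by decide +kernel) (by decide +kernel) (by decide +kernel)
    (by decide +kernel)
  simpa using h

end MaxNonassoc

namespace MaxNonassoc

def psi37 (u : ZMod 37) : ZMod 37 := if u ^ 18 = 36 then 9 * u else 7 * u

theorem good37 : Good 37 := by
  have h := good_of_psi psi37 (by decide +kernel) (by decide +kernel) (by decide +kernel)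
    (by decide +kernel)
  simpa using h

end MaxNonassoc

namespace MaxNonassoc

/-- Symmetry reduction: a commuting automorphism lets one check only orbit representatives. -/
theorem good_of_aut {G : Type} [AddCommGroup G] [Finite G] (ψ : G → G) (σ : G →+ G)
    (hσ : Function.Surjective σ) (hc : ∀ u, ψ (σ u) = σ (ψ u)) (h0 : ψ 0 = 0)
    (h1 : Function.Injective ψ) (h2 : Function.Injective fun u => u - ψ u)
    (R : List G) (hR : ∀ x, ∃ r ∈ R, ∃ k, x = σ^[k] r)
    (h3 : ∀ x ∈ R, ∀ z, x + ψ (-x) + ψ (z - (x + ψ (-x))) = x + ψ (ψ z - x) → x = 0 ∧ z = 0) :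
    Good (Nat.card G) := by
  have hinj : Function.Injective σ := Finite.injective_iff_surjective.2 hσ
  have step : ∀ k, ∀ r ∈ R, ∀ z,
      σ^[k] r + ψ (-σ^[k] r) + ψ (z - (σ^[k] r + ψ (-σ^[k] r))) = σ^[k] r + ψ (ψ z - σ^[k] r) →
      σ^[k] r = 0 ∧ z = 0 := by
    intro k r hr
    induction k with
    | zero => exact h3 r hr
    | succ k ih =>
      intro z hz
      obtain ⟨w, rfl⟩ := hσ z
      rw [Function.iterate_succ_apply'] at *
      simp only [← map_neg, hc, ← map_add, ← map_sub] at hz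
      obtain ⟨e1, e2⟩ := ih w (hinj hz)
      rw [e1, e2]
      exact ⟨map_zero σ, map_zero σ⟩
  refine good_of_psi ψ h0 h1 h2 fun x z hxz => ?_
  obtain ⟨r, hr, k, rfl⟩ := hR x
  exact step k r hr z hxz

abbrev G125 : Type := ZMod 5 × ZMod 5 × ZMod 5

/-- Multiplication in `𝔽₅[t]/(t³ + t + 1)`. -/
def mul125 (u v : G125) : G125 :=
  let c3 := u.2.1 * v.2.2 + u.2.2 * v.2.1
  let c4 := u.2.2 * v.2.2
  (u.1 * v.1 - c3, u.1 * v.2.1 + u.2.1 * v.1 - c3 - c4,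
    u.1 * v.2.2 + u.2.1 * v.2.1 + u.2.2 * v.1 - c4)

/-- Nonsquare test through the norm form. -/
def ns125 (u : G125) : Bool :=
  let x := u.1
  let y := u.2.1
  let z := u.2.2
  let n := x * ((x - z) * (x - z) + y * (y + z))
    + y * (z * (x - z) - y * y)
    + z * (z * (y + z) + (x - z) * y)
  decide (n = 2) || decide (n = 3)

def psi125 (u : G125) : G125 := if ns125 u then mul125 (2, 3, 0) u else mul125 (0, 0, 1) u

def sig125 : G125 →+ G125 where
  toFun u := mul125 (0, 0, 4) u
  map_zero' := by simp [mul125]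
  map_add' u v := by
    simp only [mul125, Prod.fst_add, Prod.snd_add, Prod.mk_add_mk, Prod.mk.injEq]
    refine ⟨?_, ?_, ?_⟩ <;> ring

def orb125 : ℕ → G125 → List G125
  | 0, _ => []
  | k + 1, r => r :: orb125 k (sig125 r)

theorem mem_orb125 (x : G125) : ∀ k r, x ∈ orb125 k r → ∃ k, x = sig125^[k] r
  | 0, r, h => by simp [orb125] at h
  | k + 1, r, h => by
    rw [orb125, List.mem_cons] at h
    rcases h with rfl | h
    · exact ⟨0, rfl⟩
    · obtain ⟨j, hj⟩ := mem_orb125 x k _ h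
      exact ⟨j + 1, hj⟩

def inv1_125 (v : G125) : G125 := if ns125 v then mul125 (2, 1, 1) v else mul125 (1, 4, 1) v

theorem left1_125 : ∀ u : G125, inv1_125 (psi125 u) = u := by decide +kernel

def inv2_125 (v : G125) : G125 := if ns125 v then mul125 (3, 3, 4) v else mul125 (0, 1, 2) v

theorem left2_125 : ∀ u : G125, inv2_125 (u - psi125 u) = u := by decide +kernel

theorem comm125 : ∀ u : G125, psi125 (sig125 u) = sig125 (psi125 u) := by decide +kernel

theorem surj125 : ∀ u : G125, sig125 (mul125 (4, 1, 4) u) = u := by decide +kernel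

theorem cover125 : ∀ u : G125, u = 0 ∨ u ∈ orb125 62 (1, 0, 0) ∨ u ∈ orb125 62 (0, 0, 2) := by
  decide +kernel

theorem chk125 : ∀ x ∈ ([(0, 0, 0), (1, 0, 0), (0, 0, 2)] : List G125), ∀ z,
    x + psi125 (-x) + psi125 (z - (x + psi125 (-x))) = x + psi125 (psi125 z - x) →
      x = 0 ∧ z = 0 := by
  decide +kernel

theorem good125 : Good 125 := by
  have h := good_of_aut psi125 sig125 (fun u => ⟨_, surj125 u⟩) comm125 (by decide +kernel)
    (Function.LeftInverse.injective (g := inv1_125) left1_125)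
    (Function.LeftInverse.injective (g := inv2_125) left2_125) _ ?_ chk125
  · have hc : Nat.card G125 = 125 := by simp
    rwa [hc] at h
  · intro x
    rcases cover125 x with h | h | h
    · exact ⟨(0, 0, 0), by simp, 0, h⟩
    · exact ⟨(1, 0, 0), by simp, mem_orb125 _ _ _ h⟩
    · exact ⟨(0, 0, 2), by simp, mem_orb125 _ _ _ h⟩

end MaxNonassoc

namespace MaxNonassoc

theorem qchar_of_pow_one {K : Type} [Field K] [Fintype K] [DecidableEq K] (hc : ringChar K ≠ 2)
    (u : K) (h : u ^ (Fintype.card K / 2) = 1) : quadraticChar K u = 1 := by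
  have h11 : (-1 : K) ≠ 1 := Ring.neg_one_ne_one_of_char_ne_two hc
  have hpos : Fintype.card K / 2 ≠ 0 := (Nat.div_pos Fintype.one_lt_card two_pos).ne'
  have hu : u ≠ 0 := by rintro rfl; rw [zero_pow hpos] at h; exact zero_ne_one h
  rw [← quadraticChar_eq_pow_of_char_ne_two' hc] at h
  rcases quadraticChar_dichotomy hu with h' | h'
  · exact h'
  · rw [h'] at h; push_cast at h; exact absurd h h11

theorem qchar_of_pow_neg {K : Type} [Field K] [Fintype K] [DecidableEq K] (hc : ringChar K ≠ 2)
    (u : K) (h : u ^ (Fintype.card K / 2) = -1) : quadraticChar K u = -1 := by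
  have h11 : (-1 : K) ≠ 1 := Ring.neg_one_ne_one_of_char_ne_two hc
  have hpos : Fintype.card K / 2 ≠ 0 := (Nat.div_pos Fintype.one_lt_card two_pos).ne'
  have hu : u ≠ 0 := by
    rintro rfl; rw [zero_pow hpos] at h; exact neg_ne_zero.2 one_ne_zero h.symm
  rw [← quadraticChar_eq_pow_of_char_ne_two' hc] at h
  rcases quadraticChar_dichotomy hu with h' | h'
  · rw [h'] at h; push_cast at h; exact absurd h.symm h11
  · exact h'

def chk (p b : ℕ) : Bool :=
  Nat.beq ((b + 2) ^ (p / 2) % p) 1 && Nat.beq ((b + 1) ^ (p / 2) % p) (p - 1) &&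
    Nat.beq ((b * b + 3 * b + 1) ^ (p / 2) % p) (p - 1) &&
    Nat.beq ((b * b + 5 * b + 5) ^ (p / 2) % p) (p - 1)

def findA (p : ℕ) : ℕ → Bool
  | 0 => false
  | n + 1 => chk p n || findA p n

def hasDiv (p : ℕ) : ℕ → Bool
  | 0 => false
  | n + 1 => (Nat.beq (p % (n + 2)) 0 && Nat.blt (n + 2) p) || hasDiv p n

def chkAll : ℕ → Bool
  | 0 => true
  | n + 1 => (Nat.beq n 1 || Nat.beq n 6 || hasDiv (4 * n + 13) 114 || findA (4 * n + 13) 100)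
      && chkAll n

theorem chkAll_true : chkAll 3310 = true := by decide +kernel

theorem findA_spec (p : ℕ) : ∀ n, findA p n = true → ∃ b, chk p b = true
  | 0, h => by simp [findA] at h
  | n + 1, h => by
    rw [findA, Bool.or_eq_true] at h
    rcases h with h | h
    · exact ⟨n, h⟩
    · exact findA_spec p n h

theorem hasDiv_spec (p : ℕ) : ∀ n, hasDiv p n = true → ¬ p.Prime
  | 0, h => by simp [hasDiv] at h
  | n + 1, h => by
    rw [hasDiv, Bool.or_eq_true, Bool.and_eq_true] at h
    rcases h with ⟨h1, h2⟩ | h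
    · intro hp
      have h1 := Nat.eq_of_beq_eq_true h1
      have h2 : n + 2 < p := by simpa [Nat.blt_eq] using h2
      rcases (Nat.dvd_prime hp).1 (Nat.dvd_of_mod_eq_zero h1) with h | h <;> omega
    · exact hasDiv_spec p n h

theorem chkAll_spec : ∀ N, chkAll N = true → ∀ n < N,
    n = 1 ∨ n = 6 ∨ ¬ (4 * n + 13).Prime ∨ ∃ b, chk (4 * n + 13) b = true
  | 0, _, n, hn => by omega
  | N + 1, h, n, hn => by
    rw [chkAll, Bool.and_eq_true] at h
    rcases Nat.lt_succ_iff_lt_or_eq.1 hn with h' | rfl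
    · exact chkAll_spec N h.2 n h'
    · have h := h.1
      simp only [Bool.or_eq_true] at h
      rcases h with ((h | h) | h) | h
      · exact Or.inl (Nat.eq_of_beq_eq_true h)
      · exact Or.inr (Or.inl (Nat.eq_of_beq_eq_true h))
      · exact Or.inr (Or.inr (Or.inl (hasDiv_spec _ _ h)))
      · exact Or.inr (Or.inr (Or.inr (findA_spec _ _ h)))

theorem good_of_chk (p b : ℕ) [Fact p.Prime] (hp : p % 4 = 1) (h : chk p b = true) : Good p := by
  have hc : ringChar (ZMod p) ≠ 2 := by
    rw [ZMod.ringChar_zmod_n]; omega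
  have hpp : 1 ≤ p := by omega
  have key1 : ∀ n : ℕ, Nat.beq (n ^ (p / 2) % p) 1 = true →
      quadraticChar (ZMod p) (n : ZMod p) = 1 := by
    intro n hn
    apply qchar_of_pow_one hc
    rw [ZMod.card, ← Nat.cast_pow, ← ZMod.natCast_mod, Nat.eq_of_beq_eq_true hn, Nat.cast_one]
  have key2 : ∀ n : ℕ, Nat.beq (n ^ (p / 2) % p) (p - 1) = true →
      quadraticChar (ZMod p) (n : ZMod p) = -1 := by
    intro n hn
    apply qchar_of_pow_neg hc
    rw [ZMod.card, ← Nat.cast_pow, ← ZMod.natCast_mod, Nat.eq_of_beq_eq_true hn,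
      Nat.cast_sub hpp]
    simp
  have hm1 : quadraticChar (ZMod p) (-1) = 1 := by
    rw [quadraticChar_neg_one hc, ZMod.card, ZMod.χ₄_nat_one_mod_four hp]
  simp only [chk, Bool.and_eq_true] at h
  obtain ⟨⟨⟨k1, k2⟩, k3⟩, k4⟩ := h
  have k1 := key1 _ k1
  have k2 := key2 _ k2
  have k3 := key2 _ k3
  have k4 := key2 _ k4
  have hg := family (quadraticChar (ZMod p)) (fun u hu => quadraticChar_dichotomy hu) hm1
    ((b + 2 : ℕ) : ZMod p) k1 ?_ ?_ ?_
  · simpa using hg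
  · rw [show (1 : ZMod p) - ((b + 2 : ℕ) : ZMod p) = (-1) * ((b + 1 : ℕ) : ZMod p) by
      push_cast; ring, map_mul, hm1, k2, one_mul]
  · rw [← k3]; congr 1; push_cast; ring
  · rw [← k4]; congr 1; push_cast; ring

theorem good_small_prime (p : ℕ) (hpp : p.Prime) (hp : p % 4 = 1) (h13 : 13 ≤ p) (h17 : p ≠ 17)
    (h37 : p ≠ 37) (hlt : p < 13250) : Good p := by
  have := Fact.mk hpp
  have h := chkAll_spec 3310 chkAll_true ((p - 13) / 4) (by omega)
  rw [show 4 * ((p - 13) / 4) + 13 = p by omega] at h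
  rcases h with h | h | h | ⟨b, h⟩
  · omega
  · omega
  · exact absurd hpp h
  · exact good_of_chk p b hp h

theorem good_sq_aux {K : Type} [Field K] [Fintype K] [DecidableEq K] (p : ℕ) [Fact p.Prime]
    [CharP K p] (hcard : Fintype.card K = p ^ 2) (hp : p % 4 = 3) (x y : ℤ)
    (h1 : (x ^ 2 + y ^ 2) ^ (p / 2) % p = 1)
    (h2 : ((1 - x) ^ 2 + y ^ 2) ^ (p / 2) % p = p - 1)
    (h3 : ((x ^ 2 - y ^ 2 - x - 1) ^ 2 + (2 * x * y - y) ^ 2) ^ (p / 2) % p = p - 1)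
    (h4 : ((x ^ 2 - y ^ 2 + x - 1) ^ 2 + (2 * x * y + y) ^ 2) ^ (p / 2) % p = p - 1) :
    Good (p ^ 2) := by
  have hpow : p ^ 2 % 4 = 1 := by rw [Nat.pow_mod, hp]
  have hc : ringChar K ≠ 2 := by
    intro h
    have := FiniteField.even_card_iff_char_two.1 h
    rw [hcard] at this
    omega
  have hm1 : quadraticChar K (-1) = 1 := by
    rw [quadraticChar_neg_one hc, hcard, ZMod.χ₄_nat_one_mod_four hpow]
  obtain ⟨i, hi⟩ : IsSquare (-1 : K) := by
    rw [FiniteField.isSquare_neg_one_iff, hcard]; omega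
  have hip : i ^ p = -i := by
    have : p = 2 * (2 * (p / 4) + 1) + 1 := by omega
    rw [this, pow_succ, pow_mul, pow_two, ← hi, pow_succ, pow_mul]
    simp
  have hnorm : ∀ x y : ℤ, ((x : K) + y * i) ^ (Fintype.card K / 2) =
      (((x ^ 2 + y ^ 2) ^ (p / 2) : ℤ) : K) := by
    intro x y
    have hf : ((x : K) + y * i) ^ p = x - y * i := by
      rw [← frobenius_def, map_add, map_mul, map_intCast, map_intCast, frobenius_def, hip]
      ring
    have he : p ^ 2 / 2 = (p + 1) * (p / 2) := by
      obtain ⟨k, hk⟩ : ∃ k, p = 2 * k + 1 := ⟨p / 2, by omega⟩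
      have e1 : p / 2 = k := by omega
      have e2 : p ^ 2 = 2 * ((p + 1) * k) + 1 := by rw [hk]; ring
      have e3 : p ^ 2 = 2 * ((p + 1) * (p / 2)) + 1 := by rw [e1, e2]
      generalize (p + 1) * (p / 2) = w at e3 ⊢
      omega
    rw [hcard, he, pow_mul, pow_succ, hf]
    push_cast
    congr 1
    linear_combination (y : K) ^ 2 * hi
  have hmod : ∀ n : ℤ, ((n % p : ℤ) : K) = n := by
    intro n
    have h := congrArg (Int.cast : ℤ → K) (Int.emod_add_mul_ediv n p)
    push_cast at h
    rw [CharP.cast_eq_zero K p, zero_mul, add_zero] at h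
    exact h
  have key1 : ∀ x y : ℤ, (x ^ 2 + y ^ 2) ^ (p / 2) % p = 1 →
      quadraticChar K ((x : K) + y * i) = 1 := by
    intro x y h
    apply qchar_of_pow_one hc
    rw [hnorm, ← hmod, h, Int.cast_one]
  have key2 : ∀ x y : ℤ, (x ^ 2 + y ^ 2) ^ (p / 2) % p = p - 1 →
      quadraticChar K ((x : K) + y * i) = -1 := by
    intro x y h
    apply qchar_of_pow_neg hc
    rw [hnorm, ← hmod, h]
    push_cast
    rw [CharP.cast_eq_zero K p, zero_sub]
  rw [← hcard, ← Nat.card_eq_fintype_card]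
  have k2 := key2 (1 - x) (-y) (by rw [neg_sq]; exact h2)
  have k3 := key2 _ _ h3
  have k4 := key2 _ _ h4
  refine family (quadraticChar K) (fun u hu => quadraticChar_dichotomy hu) hm1
    ((x : K) + y * i) (key1 x y h1) ?_ ?_ ?_
  · rw [← k2]; congr 1; push_cast; ring
  · rw [← k3]; congr 1; push_cast; linear_combination (-(y : K) ^ 2) * hi
  · rw [← k4]; congr 1; push_cast; linear_combination (-(y : K) ^ 2) * hi

theorem good_sq (p : ℕ) [Fact p.Prime] (hp : p % 4 = 3) (x y : ℤ)
    (h1 : (x ^ 2 + y ^ 2) ^ (p / 2) % p = 1)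
    (h2 : ((1 - x) ^ 2 + y ^ 2) ^ (p / 2) % p = p - 1)
    (h3 : ((x ^ 2 - y ^ 2 - x - 1) ^ 2 + (2 * x * y - y) ^ 2) ^ (p / 2) % p = p - 1)
    (h4 : ((x ^ 2 - y ^ 2 + x - 1) ^ 2 + (2 * x * y + y) ^ 2) ^ (p / 2) % p = p - 1) :
    Good (p ^ 2) := by
  have : Fintype (GaloisField p 2) := Fintype.ofFinite _
  have : DecidableEq (GaloisField p 2) := Classical.decEq _
  refine good_sq_aux (K := GaloisField p 2) p ?_ hp x y h1 h2 h3 h4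
  rw [← Nat.card_eq_fintype_card, GaloisField.card p 2 two_ne_zero]

theorem good_small_sq (p : ℕ) (hpp : p.Prime) (hp : p % 4 = 3) (hlt : p < 115) :
    Good (p ^ 2) := by
  have := Fact.mk hpp
  have hl : ∀ n < 115, n % 4 = 3 → hasDiv n 113 = false →
      n ∈ [3, 7, 11, 19, 23, 31, 43, 47, 59, 67, 71, 79, 83, 103, 107] := by decide +kernel
  have hd : hasDiv p 113 = false := by
    rw [← Bool.not_eq_true]
    exact fun h => hasDiv_spec p _ h hpp
  have hl := hl p hlt hp hd
  simp only [List.mem_cons, List.not_mem_nil, or_false] at hl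
  rcases hl with rfl | rfl | rfl | rfl | rfl | rfl | rfl | rfl | rfl | rfl | rfl |
    rfl | rfl | rfl | rfl
  · exact good_sq 3 hp 0 1 (by decide) (by decide) (by decide) (by decide)
  · exact good_sq 7 hp 2 2 (by norm_num) (by norm_num) (by norm_num) (by norm_num)
  · exact good_sq 11 hp 0 3 (by norm_num) (by norm_num) (by norm_num) (by norm_num)
  · exact good_sq 19 hp 0 3 (by norm_num) (by norm_num) (by norm_num) (by norm_num)
  · exact good_sq 23 hp 0 3 (by norm_num) (by norm_num) (by norm_num) (by norm_num)
  · exact good_sq 31 hp 0 4 (by norm_num) (by norm_num) (by norm_num) (by norm_num)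
  · exact good_sq 43 hp 0 1 (by norm_num) (by norm_num) (by norm_num) (by norm_num)
  · exact good_sq 47 hp 0 2 (by norm_num) (by norm_num) (by norm_num) (by norm_num)
  · exact good_sq 59 hp 0 3 (by norm_num) (by norm_num) (by norm_num) (by norm_num)
  · exact good_sq 67 hp 0 1 (by norm_num) (by norm_num) (by norm_num) (by norm_num)
  · exact good_sq 71 hp 0 4 (by norm_num) (by norm_num) (by norm_num) (by norm_num)
  · exact good_sq 79 hp 0 4 (by norm_num) (by norm_num) (by norm_num) (by norm_num)
  · exact good_sq 83 hp 0 1 (by norm_num) (by norm_num) (by norm_num) (by norm_num)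
  · exact good_sq 103 hp 0 3 (by norm_num) (by norm_num) (by norm_num) (by norm_num)
  · exact good_sq 107 hp 0 1 (by norm_num) (by norm_num) (by norm_num) (by norm_num)

end MaxNonassoc

namespace MaxNonassoc

theorem good_prime (p : ℕ) (hpp : p.Prime) (hp : p % 4 = 1) (h13 : 13 ≤ p) : Good p := by
  have := Fact.mk hpp
  by_cases h17 : p = 17
  · rw [h17]; exact good17
  by_cases h37 : p = 37
  · rw [h37]; exact good37
  by_cases hlt : p < 13250
  · exact good_small_prime p hpp hp h13 h17 h37 hlt
  have h := good_large (K := ZMod p) p (by rw [ZMod.card]; exact hp) (Nat.sqrt p) ?_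
    (Nat.sqrt_le_self p) ?_ ?_
  · rwa [ZMod.card] at h
  · rw [Nat.le_sqrt]; omega
  · rw [ZMod.card]; exact Nat.sqrt_le p
  · rw [ZMod.card]
    have := Nat.sqrt_le_add p
    nlinarith

theorem good_prime_sq (p : ℕ) (hpp : p.Prime) (hp : p % 4 = 3) : Good (p ^ 2) := by
  have := Fact.mk hpp
  by_cases hlt : p < 115
  · exact good_small_sq p hpp hp hlt
  have : Fintype (GaloisField p 2) := Fintype.ofFinite _
  have : DecidableEq (GaloisField p 2) := Classical.decEq _
  have hc : Fintype.card (GaloisField p 2) = p ^ 2 := by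
    rw [← Nat.card_eq_fintype_card, GaloisField.card p 2 two_ne_zero]
  have h := good_large (K := GaloisField p 2) p (by rw [hc, Nat.pow_mod, hp]) p (by omega)
    le_rfl (by rw [hc, sq]) (by rw [hc]; nlinarith)
  rwa [hc] at h

theorem good_five : ∀ e : ℕ, 2 ≤ e → Good (5 ^ e) := by
  intro e he
  have h25 : Good (5 ^ 2) := good25
  have h125 : Good (5 ^ 3) := good125
  rcases Nat.even_or_odd' e with ⟨k, rfl | rfl⟩
  · rw [pow_mul]; exact h25.pow (by omega)
  · by_cases hk : k = 1
    · subst hk; exact h125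
    · have h := (h25.pow (n := k - 1) (by omega)).mul h125
      rw [← pow_mul, ← pow_add] at h
      rwa [show 2 * k + 1 = 2 * (k - 1) + 3 by omega]

theorem good_all (q : ℕ) (hq : IsPrimePow q) (h4 : q % 4 = 1) (h9 : 9 ≤ q) : Good q := by
  obtain ⟨p, e, hp, he, rfl⟩ := (isPrimePow_nat_iff _).1 hq
  have hodd : p % 2 = 1 := by
    rcases Nat.mod_two_eq_zero_or_one p with h | h
    · have : p ^ e % 2 = 0 := by simp [Nat.pow_mod, h, he.ne']
      omega
    · exact h
  rcases (by omega : p % 4 = 1 ∨ p % 4 = 3) with h | h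
  · by_cases h13 : 13 ≤ p
    · exact (good_prime p hp h h13).pow he
    · have : p = 5 := by
        have := hp.two_le
        have h1 : p ≠ 9 := by rintro rfl; exact absurd hp (by norm_num)
        omega
      subst this
      apply good_five
      by_contra hlt
      have : e = 1 := by omega
      subst this
      omega
  · rcases Nat.even_or_odd' e with ⟨k, rfl | rfl⟩
    · rw [pow_mul]
      exact (good_prime_sq p hp h).pow (by omega)
    · exfalso
      have h1 : p ^ 2 % 4 = 1 := by rw [Nat.pow_mod, h]
      rw [pow_succ, pow_mul, Nat.mul_mod, Nat.pow_mod, h1, h] at h4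
      simp at h4

end MaxNonassoc

/-- Theorem 3.5: for every prime power `q ≡ 1 (mod 4)` with `q ≥ 9` there is a
maximally nonassociative quasigroup of order `q`. -/
theorem exists_maxNonassoc_q1mod4 (q : ℕ) (hq : IsPrimePow q)
    (h4 : q % 4 = 1) (h9 : 9 ≤ q) :
    ∃ (Q : Type) (m : Q → Q → Q),
      Nat.card Q = q ∧
      (∀ a b : Q, (∃! x, m a x = b) ∧ (∃! y, m y a = b)) ∧
      Nat.card {t : Q × Q × Q //
        m (m t.1 t.2.1) t.2.2 = m t.1 (m t.2.1 t.2.2)} = q := by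
  exact (MaxNonassoc.good_all q hq h4 h9).result
end
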